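/- There exist universal constants c_1, c_2 > 0 such that for every continuous function f : [0,1] → ℝ and every integer n ≥ 1, c_1 ω_φ^2(f, 1/√n) ≤ sup_{p∈[0,1]} |B_n[f](p) − f(p)| ≤ c_2 ω_φ^2(f, 1/√n). -/

import Mathlib

/-- Bernstein operator: `B_m[g](p) = Σ_{k=0}^m C(m,k) p^k (1-p)^{m-k} g(k/m)`. -/
noncomputable def bernstein' (m : ℕ) (g : ℝ → ℝ) (p : ℝ) : ℝ :=
  ∑ k ∈ Finset.range (m + 1), (m.choose k : ℝ) * p ^ k * (1 - p) ^ (m - k) * g ((k : ℝ) / m)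

/-- `r`-th symmetric difference of `g` with step `h`, vanishing near the boundary of `[0,1]`. -/
noncomputable def ditzSymmDiff (r : ℕ) (h : ℝ) (g : ℝ → ℝ) (x : ℝ) : ℝ :=
  if x - r * h / 2 ∈ Set.Icc (0:ℝ) 1 ∧ x + r * h / 2 ∈ Set.Icc (0:ℝ) 1 then
    ∑ k ∈ Finset.range (r + 1), (-1 : ℝ) ^ k * (r.choose k : ℝ) * g (x + r * h / 2 - k * h)
  else 0

/-- `r`-th Ditzian–Totik modulus of smoothness with weight `φ(x) = √(x(1-x))`. -/
noncomputable def dtMod (r : ℕ) (g : ℝ → ℝ) (t : ℝ) : ℝ :=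
  sSup {y : ℝ | ∃ h x : ℝ, 0 < h ∧ h ≤ t ∧ x ∈ Set.Icc (0:ℝ) 1 ∧
    y = |ditzSymmDiff r (h * Real.sqrt (x * (1 - x))) g x|}

/-- Sup norm on `[0,1]`. -/
noncomputable def supAbsOn (g : ℝ → ℝ) : ℝ := sSup ((fun p => |g p|) '' Set.Icc (0:ℝ) 1)

/-- Jackknife coefficients `C_i = ∏_{j≠i} n_i/(n_i - n_j)`. -/
noncomputable def jackCoeff {r : ℕ} (ns : Fin r → ℕ) (i : Fin r) : ℝ :=
  ∏ j ∈ Finset.univ.erase i, (ns i : ℝ) / ((ns i : ℝ) - (ns j : ℝ))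

/-- Sup over `p ∈ [0,1]` of the `r`-jackknife bias `|Σ_i C_i B_{n_i}[f](p) - f(p)|`. -/
noncomputable def jackBias {r : ℕ} (ns : Fin r → ℕ) (f : ℝ → ℝ) : ℝ :=
  sSup ((fun p => |(∑ i, jackCoeff ns i * bernstein' (ns i) f p) - f p|) '' Set.Icc (0:ℝ) 1)

/-- The binomial weight `C(n,k) x^k (1-x)^{n-k}`. -/
noncomputable def bernWeight (n k : ℕ) (x : ℝ) : ℝ := (n.choose k : ℝ) * x ^ k * (1 - x) ^ (n - k)

/-- The Bernstein polynomial with coefficient sequence `a`. -/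
noncomputable def bernSum (n : ℕ) (a : ℕ → ℝ) (x : ℝ) : ℝ :=
  ∑ k ∈ Finset.range (n + 1), bernWeight n k x * a k

/-- The second difference `a (i + 2) - 2 a (i + 1) + a i`. -/
def secondDiff (a : ℕ → ℝ) (i : ℕ) : ℝ := a (i + 2) - 2 * a (i + 1) + a i

/-- The values of the Bernstein polynomial of `a` at the grid points `k / n`. -/
noncomputable def bernGrid (n : ℕ) (a : ℕ → ℝ) (k : ℕ) : ℝ := bernSum n a ((k : ℝ) / n)

lemma bernWeight_nonneg (n k : ℕ) {x : ℝ} (h0 : 0 ≤ x) (h1 : x ≤ 1) : 0 ≤ bernWeight n k x := by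
  have : 0 ≤ 1 - x := by linarith
  unfold bernWeight; positivity

lemma bernSum_add (n : ℕ) (a b : ℕ → ℝ) (x : ℝ) :
    bernSum n (fun k => a k + b k) x = bernSum n a x + bernSum n b x := by
  simp [bernSum, mul_add, Finset.sum_add_distrib]

lemma bernSum_sub (n : ℕ) (a b : ℕ → ℝ) (x : ℝ) :
    bernSum n (fun k => a k - b k) x = bernSum n a x - bernSum n b x := by
  simp [bernSum, mul_sub, Finset.sum_sub_distrib]

lemma bernSum_mul (n : ℕ) (c : ℝ) (a : ℕ → ℝ) (x : ℝ) :
    bernSum n (fun k => c * a k) x = c * bernSum n a x := by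
  simp only [bernSum, Finset.mul_sum]
  exact Finset.sum_congr rfl fun k _ => by ring

lemma bernSum_neg (n : ℕ) (a : ℕ → ℝ) (x : ℝ) :
    bernSum n (fun k => - a k) x = - bernSum n a x := by
  simp [bernSum]

lemma bernSum_sum (n : ℕ) {ι : Type*} (s : Finset ι) (a : ι → ℕ → ℝ) (x : ℝ) :
    bernSum n (fun k => ∑ i ∈ s, a i k) x = ∑ i ∈ s, bernSum n (a i) x := by
  simp only [bernSum, Finset.mul_sum]
  exact Finset.sum_comm

lemma bernSum_congr (n : ℕ) {a b : ℕ → ℝ} (h : ∀ k ≤ n, a k = b k) (x : ℝ) :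
    bernSum n a x = bernSum n b x :=
  Finset.sum_congr rfl fun k hk => by rw [h k (by simpa [Nat.lt_succ_iff] using hk)]

/-- De Casteljau's recursion. -/
lemma bernSum_succ (n : ℕ) (a : ℕ → ℝ) (x : ℝ) :
    bernSum (n + 1) a x = (1 - x) * bernSum n a x + x * bernSum n (fun k => a (k + 1)) x := by
  unfold bernSum
  rw [Finset.sum_range_succ', Finset.sum_range_succ]
  have h1 : ∀ k ∈ Finset.range n, bernWeight (n + 1) (k + 1) x * a (k + 1) =
      (1 - x) * (bernWeight n (k + 1) x * a (k + 1)) + x * (bernWeight n k x * a (k + 1)) := by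
    intro k hk
    have hk' : k < n := by simpa using hk
    obtain ⟨m, rfl⟩ : ∃ m, n = k + 1 + m := ⟨n - (k + 1), by omega⟩
    unfold bernWeight
    rw [Nat.choose_succ_succ, show k + 1 + m + 1 - (k + 1) = m + 1 by omega,
      show k + 1 + m - (k + 1) = m by omega, show k + 1 + m - k = m + 1 by omega]
    push_cast
    ring
  rw [Finset.sum_congr rfl h1, Finset.sum_add_distrib, Finset.sum_range_succ' (n := n),
    Finset.sum_range_succ (n := n), ← Finset.mul_sum, ← Finset.mul_sum]
  simp only [bernWeight, Nat.choose_self, Nat.choose_zero_right, Nat.sub_self, Nat.sub_zero]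
  push_cast
  ring

lemma bernSum_zero (a : ℕ → ℝ) (x : ℝ) : bernSum 0 a x = a 0 := by simp [bernSum, bernWeight]

lemma bernSum_const (n : ℕ) (c x : ℝ) : bernSum n (fun _ => c) x = c := by
  induction n with
  | zero => simp [bernSum_zero]
  | succ n ih => rw [bernSum_succ, ih]; ring

lemma bernSum_id (n : ℕ) (x : ℝ) : bernSum n (fun k => (k : ℝ)) x = n * x := by
  induction n with
  | zero => simp [bernSum_zero]
  | succ n ih =>
    rw [bernSum_succ, ih]
    push_cast
    rw [bernSum_add, bernSum_const, ih]; ring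

lemma bernSum_sq (n : ℕ) (x : ℝ) :
    bernSum n (fun k => (k : ℝ) ^ 2) x = (n * x) ^ 2 + n * x * (1 - x) := by
  induction n with
  | zero => simp [bernSum_zero]
  | succ n ih =>
    have h : (fun k : ℕ => ((k + 1 : ℕ) : ℝ) ^ 2) =
        fun k : ℕ => ((k : ℝ) ^ 2 + 2 * (k : ℝ)) + 1 := by
      funext k; push_cast; ring
    rw [bernSum_succ, h, bernSum_add, bernSum_add, bernSum_mul, bernSum_const, bernSum_id, ih]
    push_cast
    ring

lemma bernSum_cube (n : ℕ) (x : ℝ) :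
    bernSum n (fun k => (k : ℝ) ^ 3) x =
      (n * x) ^ 3 + 3 * (n * x) * (n * x * (1 - x)) + n * x * (1 - x) * (1 - 2 * x) := by
  induction n with
  | zero => simp [bernSum_zero]
  | succ n ih =>
    have h : (fun k : ℕ => ((k + 1 : ℕ) : ℝ) ^ 3) =
        fun k : ℕ => ((k : ℝ) ^ 3 + 3 * (k : ℝ) ^ 2) + (3 * (k : ℝ) + 1) := by
      funext k; push_cast; ring
    rw [bernSum_succ, h, bernSum_add, bernSum_add, bernSum_add, bernSum_mul, bernSum_mul,
      bernSum_const, bernSum_id, bernSum_sq, ih]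
    push_cast
    ring

lemma bernSum_mono (n : ℕ) {a b : ℕ → ℝ} (h : ∀ k ≤ n, a k ≤ b k) {x : ℝ}
    (h0 : 0 ≤ x) (h1 : x ≤ 1) : bernSum n a x ≤ bernSum n b x :=
  Finset.sum_le_sum fun k hk => mul_le_mul_of_nonneg_left
    (h k (by simpa [Nat.lt_succ_iff] using hk)) (bernWeight_nonneg n k h0 h1)

lemma abs_bernSum_le (n : ℕ) {a : ℕ → ℝ} {c : ℝ} (h : ∀ k ≤ n, |a k| ≤ c) {x : ℝ}
    (h0 : 0 ≤ x) (h1 : x ≤ 1) : |bernSum n a x| ≤ c := by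
  rw [abs_le]
  constructor
  · rw [← bernSum_const n (-c) x]
    exact bernSum_mono n (fun k hk => (abs_le.1 (h k hk)).1) h0 h1
  · rw [← bernSum_const n c x]
    exact bernSum_mono n (fun k hk => (abs_le.1 (h k hk)).2) h0 h1

lemma bernSum_reflect (n : ℕ) (a : ℕ → ℝ) (x : ℝ) :
    bernSum n (fun k => a (n - k)) x = bernSum n a (1 - x) := by
  unfold bernSum
  rw [← Finset.sum_range_reflect]
  refine Finset.sum_congr rfl fun k hk => ?_
  have hk' : k ≤ n := by simpa [Nat.lt_succ_iff] using hk
  simp only [show n + 1 - 1 - k = n - k by omega, show n - (n - k) = k by omega]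
  unfold bernWeight
  rw [Nat.choose_symm hk', show n - (n - k) = k by omega]
  ring

lemma hasDerivAt_bernSum (n : ℕ) (a : ℕ → ℝ) (x : ℝ) :
    HasDerivAt (bernSum (n + 1) a)
      ((n + 1) * bernSum n (fun k => a (k + 1) - a k) x) x := by
  induction n generalizing a with
  | zero =>
    have h : bernSum (0 + 1) a = fun x => (1 - x) * a 0 + x * a 1 := by
      funext y; rw [bernSum_succ, bernSum_zero, bernSum_zero]
    rw [h, bernSum_zero]
    have h2 := (((hasDerivAt_id x).const_sub 1).mul_const (a 0)).add
      ((hasDerivAt_id x).mul_const (a 1))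
    refine h2.congr_deriv ?_
    push_cast; ring
  | succ n ih =>
    have h : bernSum (n + 1 + 1) a = fun x => (1 - x) * bernSum (n + 1) a x +
        x * bernSum (n + 1) (fun k => a (k + 1)) x := by
      funext y; rw [bernSum_succ]
    rw [h, bernSum_sub]
    have h2 := (((hasDerivAt_id x).const_sub 1).mul (ih a)).add
      ((hasDerivAt_id x).mul (ih fun k => a (k + 1)))
    refine h2.congr_deriv ?_
    have e1 := bernSum_succ n (fun k => a (k + 1) - a k) x
    rw [bernSum_sub] at e1
    simp only [id]
    push_cast
    linear_combination (-(n + 1 : ℝ)) * e1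

/-- The second derivative of a Bernstein polynomial. -/
noncomputable def bernSum₂ (m : ℕ) (a : ℕ → ℝ) (x : ℝ) : ℝ :=
  (m + 2) * ((m + 1) * bernSum m (secondDiff a) x)

lemma hasDerivAt_bernSum_deriv (m : ℕ) (a : ℕ → ℝ) (x : ℝ) :
    HasDerivAt (fun y => ((m + 1 : ℕ) + 1 : ℝ) * bernSum (m + 1) (fun k => a (k + 1) - a k) y)
      (bernSum₂ m a x) x := by
  have h := (hasDerivAt_bernSum m (fun k => a (k + 1) - a k) x).const_mul ((m + 1 : ℕ) + 1 : ℝ)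
  refine h.congr_deriv ?_
  unfold bernSum₂
  have : secondDiff a = fun k => a (k + 1 + 1) - a (k + 1) - (a (k + 1) - a k) := by
    funext k; unfold secondDiff; ring
  rw [this]
  push_cast
  ring

lemma bernWeight_identity (m i : ℕ) (hi : i ≤ m) (x : ℝ) :
    x * (1 - x) * ((m + 2) * ((m + 1) * bernWeight m i x)) =
      (i + 1) * (m + 1 - i) * bernWeight (m + 2) (i + 1) x := by
  obtain ⟨r, rfl⟩ : ∃ r, m = i + r := ⟨m - i, by omega⟩
  have h1 : ((i + r + 2).choose (i + 1) : ℝ) * (i + 1) * (r + 1) =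
      (i + r + 2) * (i + r + 1) * ((i + r).choose i) := by
    have e1 := Nat.add_one_mul_choose_eq (i + r + 1) i
    have e2 := Nat.choose_mul_succ_eq (i + r) i
    rw [show i + r + 1 - i = r + 1 by omega] at e2
    have e1' : ((i + r + 2 : ℕ) : ℝ) * ((i + r + 1).choose i) =
        ((i + r + 2).choose (i + 1)) * ((i + 1 : ℕ) : ℝ) := by exact_mod_cast e1
    have e2' : ((i + r).choose i : ℝ) * ((i + r + 1 : ℕ) : ℝ) =
        ((i + r + 1).choose i) * ((r + 1 : ℕ) : ℝ) := by exact_mod_cast e2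
    push_cast at e1' e2'
    linear_combination (-(r + 1 : ℝ)) * e1' - (i + r + 2 : ℝ) * e2'
  unfold bernWeight
  rw [show i + r + 2 - (i + 1) = r + 1 by omega, show i + r - i = r by omega]
  push_cast
  linear_combination (-(x ^ (i + 1) * (1 - x) ^ (r + 1))) * h1

/-- The Bernstein operator intertwines `φ² d²/dx²` with its discrete analogue. -/
lemma phi_sq_mul_bernSum₂ (m : ℕ) (a : ℕ → ℝ) (x : ℝ) :
    x * (1 - x) * bernSum₂ m a x = ∑ i ∈ Finset.range (m + 1),
      bernWeight (m + 2) (i + 1) x * ((i + 1) * (m + 1 - i) * secondDiff a i) := by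
  unfold bernSum₂ bernSum
  simp only [Finset.mul_sum]
  refine Finset.sum_congr rfl fun i hi => ?_
  have := bernWeight_identity m i (by simpa [Nat.lt_succ_iff] using hi) x
  linear_combination (secondDiff a i) * this

lemma nonneg_of_second_deriv_nonneg {χ χ' χ'' : ℝ → ℝ} (h1 : ∀ s, HasDerivAt χ (χ' s) s)
    (h2 : ∀ s, HasDerivAt χ' (χ'' s) s) (h0 : χ 0 = 0) (h0' : χ' 0 = 0)
    (h : ∀ s ∈ Set.Ioo (0 : ℝ) 1, 0 ≤ χ'' s) : 0 ≤ χ 1 := by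
  have m2 : MonotoneOn χ' (Set.Icc 0 1) := by
    refine monotoneOn_of_hasDerivWithinAt_nonneg (f' := χ'') (convex_Icc 0 1)
      (fun s _ => (h2 s).continuousAt.continuousWithinAt)
      (fun s _ => (h2 s).hasDerivWithinAt) fun s hs => h s (by simpa using hs)
  have m1 : MonotoneOn χ (Set.Icc 0 1) := by
    refine monotoneOn_of_hasDerivWithinAt_nonneg (f' := χ') (convex_Icc 0 1)
      (fun s _ => (h1 s).continuousAt.continuousWithinAt)
      (fun s _ => (h1 s).hasDerivWithinAt) fun s hs => ?_
    have hs' : s ∈ Set.Ioo (0 : ℝ) 1 := by simpa using hs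
    rw [← h0']
    exact m2 (by simp) ⟨hs'.1.le, hs'.2.le⟩ hs'.1.le
  rw [← h0]
  exact m1 (by simp) (by simp) zero_le_one

lemma second_difference_ge {f f' f'' : ℝ → ℝ} (h1 : ∀ s, HasDerivAt f (f' s) s)
    (h2 : ∀ s, HasDerivAt f' (f'' s) s)
    (a c d : ℝ)
    (h : ∀ s ∈ Set.Ioo (0 : ℝ) 1, c - d * s ≤ f'' (a + s) + f'' (a - s)) :
    c / 2 - d / 6 ≤ f (a + 1) - 2 * f a + f (a - 1) := by
  have key := nonneg_of_second_deriv_nonneg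
    (χ := fun s => f (a + s) + f (a - s) - 2 * f a - (c * s ^ 2 / 2 - d * s ^ 3 / 6))
    (χ' := fun s => f' (a + s) - f' (a - s) - (c * s - d * s ^ 2 / 2))
    (χ'' := fun s => f'' (a + s) + f'' (a - s) - (c - d * s)) ?_ ?_ ?_ ?_ ?_
  · linarith
  · intro s
    have e1 := (h1 (a + s)).comp_const_add a s
    have e2 := (h1 (a - s)).comp_const_sub a s
    have e3 := ((((hasDerivAt_id s).pow 2).const_mul c).div_const 2).sub
      ((((hasDerivAt_id s).pow 3).const_mul d).div_const 6)
    refine (((e1.add e2).sub_const (2 * f a)).sub e3).congr_deriv ?_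
    simp; ring
  · intro s
    have e1 := (h2 (a + s)).comp_const_add a s
    have e2 := (h2 (a - s)).comp_const_sub a s
    have e3 := ((hasDerivAt_id s).const_mul c).sub
      ((((hasDerivAt_id s).pow 2).const_mul d).div_const 2)
    refine ((e1.sub e2).sub e3).congr_deriv ?_
    simp; ring
  · simp; ring
  · simp
  · intro s hs
    have := h s hs
    linarith

lemma second_difference_le {f f' f'' : ℝ → ℝ} (h1 : ∀ s, HasDerivAt f (f' s) s)
    (h2 : ∀ s, HasDerivAt f' (f'' s) s)
    (a c : ℝ)
    (h : ∀ s ∈ Set.Ioo (0 : ℝ) 1, f'' (a + s) + f'' (a - s) ≤ 2 * c) :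
    f (a + 1) - 2 * f a + f (a - 1) ≤ c := by
  have := second_difference_ge (f := fun s => - f s) (f' := fun s => - f' s)
    (f'' := fun s => - f'' s) (fun s => (h1 s).neg) (fun s => (h2 s).neg) a (-(2 * c)) 0
    fun s hs => by have := h s hs; linarith
  linarith

lemma sq_le_mul_log_add (r : ℝ) (h0 : 0 ≤ r) (h1 : r ≤ 1) :
    r ^ 2 ≤ (1 + r) * Real.log (1 + r) + (1 - r) * Real.log (1 - r) := by
  have m : MonotoneOn (fun r : ℝ => (1 + r) * Real.log (1 + r) + (1 - r) * Real.log (1 - r) - r ^ 2)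
      (Set.Icc 0 1) := by
    refine monotoneOn_of_hasDerivWithinAt_nonneg
      (f' := fun r => Real.log (1 + r) - Real.log (1 - r) - 2 * r) (convex_Icc 0 1) ?_ ?_ ?_
    · have := Real.continuous_mul_log
      refine Continuous.continuousOn (((this.comp (continuous_const.add continuous_id)).add
        (this.comp (continuous_const.sub continuous_id))).sub (continuous_pow 2))
    · intro s hs
      have hs' : s ∈ Set.Ioo (0 : ℝ) 1 := by simpa using hs
      have e1 := (Real.hasDerivAt_mul_log (x := 1 + s) (by linarith [hs'.1])).comp_const_add 1 s
      have e2 := (Real.hasDerivAt_mul_log (x := 1 - s) (by linarith [hs'.2])).comp_const_sub 1 s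
      refine (((e1.add e2).sub (hasDerivAt_pow 2 s)).congr_deriv ?_).hasDerivWithinAt
      simp; ring
    · intro s hs
      have hs' : s ∈ Set.Ioo (0 : ℝ) 1 := by simpa using hs
      have e1 := Real.le_log_one_add_of_nonneg (x := 2 * s / (1 - s))
        (by have := hs'.1; have := hs'.2; apply div_nonneg <;> linarith)
      have h1s : 0 < 1 - s := by linarith [hs'.2]
      have h2s : 0 < 1 + s := by linarith [hs'.1]
      have e2 : 1 + 2 * s / (1 - s) = (1 + s) / (1 - s) := by field_simp; ring
      rw [e2, Real.log_div h2s.ne' h1s.ne'] at e1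
      have e3 : 2 * (2 * s / (1 - s)) / (2 * s / (1 - s) + 2) = 2 * s := by field_simp; ring
      rw [e3] at e1
      linarith
  have := m (by simp) (⟨h0, h1⟩ : r ∈ Set.Icc (0:ℝ) 1) h0
  simp at this
  linarith

lemma mul_log_add_le (r : ℝ) (h0 : 0 ≤ r) (h1 : r ≤ 1) :
    (1 + r) * Real.log (1 + r) + (1 - r) * Real.log (1 - r) ≤ 2 * r ^ 2 := by
  have e1 : Real.log (1 + r) ≤ r := by
    have := Real.log_le_sub_one_of_pos (x := 1 + r) (by linarith); linarith
  rcases h1.eq_or_lt with rfl | h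
  · norm_num at *; linarith
  · have e2 : Real.log (1 - r) ≤ -r := by
      have := Real.log_le_sub_one_of_pos (x := 1 - r) (by linarith); linarith
    nlinarith

lemma mul_log_second_difference (y t : ℝ) (hy : 0 < y) :
    (y + t) * Real.log (y + t) - 2 * (y * Real.log y) + (y - t) * Real.log (y - t) =
      y * ((1 + t / y) * Real.log (1 + t / y) + (1 - t / y) * Real.log (1 - t / y)) := by
  have key : ∀ u, (y * u) * Real.log (y * u) = y * (u * Real.log y + u * Real.log u) := by
    intro u
    by_cases hu : u = 0
    · simp [hu]
    · rw [Real.log_mul hy.ne' hu]; ring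
  have e1 : y + t = y * (1 + t / y) := by field_simp
  have e2 : y - t = y * (1 - t / y) := by field_simp
  rw [e1, e2, key, key]
  ring

/-- The negative binary entropy, whose second derivative is `1 / (x (1 - x))`. -/
noncomputable def negEntropy (x : ℝ) : ℝ := x * Real.log x + (1 - x) * Real.log (1 - x)

lemma continuous_negEntropy : Continuous negEntropy :=
  Real.continuous_mul_log.add (Real.continuous_mul_log.comp (continuous_const.sub continuous_id))

lemma negEntropy_second_difference_bounds {y t : ℝ} (h0 : 0 < y) (h1 : y < 1) (ht : 0 ≤ t)
    (ht0 : t ≤ y) (ht1 : t ≤ 1 - y) :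
    t ^ 2 / (y * (1 - y)) ≤ negEntropy (y + t) - 2 * negEntropy y + negEntropy (y - t) ∧
      negEntropy (y + t) - 2 * negEntropy y + negEntropy (y - t) ≤ 2 * (t ^ 2 / (y * (1 - y))) := by
  have h1' : 0 < 1 - y := by linarith
  have e1 := mul_log_second_difference y t h0
  have e2 := mul_log_second_difference (1 - y) t h1'
  have a0 : 0 ≤ t / y := by positivity
  have a1 : t / y ≤ 1 := (div_le_one h0).2 ht0
  have b0 : 0 ≤ t / (1 - y) := by positivity
  have b1 : t / (1 - y) ≤ 1 := (div_le_one h1').2 ht1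
  have e3 : negEntropy (y + t) - 2 * negEntropy y + negEntropy (y - t) =
      y * ((1 + t / y) * Real.log (1 + t / y) + (1 - t / y) * Real.log (1 - t / y)) +
      (1 - y) * ((1 + t / (1 - y)) * Real.log (1 + t / (1 - y)) +
        (1 - t / (1 - y)) * Real.log (1 - t / (1 - y))) := by
    rw [← e1, ← e2]
    unfold negEntropy
    rw [show 1 - (y + t) = 1 - y - t by ring, show 1 - (y - t) = 1 - y + t by ring]
    ring
  have e4 : t ^ 2 / (y * (1 - y)) = y * (t / y) ^ 2 + (1 - y) * (t / (1 - y)) ^ 2 := by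
    field_simp; ring
  rw [e3, e4]
  constructor
  · gcongr
    · exact sq_le_mul_log_add _ a0 a1
    · exact sq_le_mul_log_add _ b0 b1
  · have := mul_le_mul_of_nonneg_left (mul_log_add_le _ a0 a1) h0.le
    have := mul_le_mul_of_nonneg_left (mul_log_add_le _ b0 b1) h1'.le
    linarith

lemma hasDerivAt_negEntropy {x : ℝ} (h0 : 0 < x) (h1 : x < 1) :
    HasDerivAt negEntropy (Real.log x - Real.log (1 - x)) x := by
  have e1 := Real.hasDerivAt_mul_log (x := x) h0.ne'
  have e2 := (Real.hasDerivAt_mul_log (x := 1 - x) (by linarith)).comp_const_sub 1 x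
  exact (e1.add e2).congr_deriv (by ring)

lemma hasDerivAt_negEntropy_deriv {x : ℝ} (h0 : 0 < x) (h1 : x < 1) :
    HasDerivAt (fun x => Real.log x - Real.log (1 - x)) (1 / (x * (1 - x))) x := by
  have h1' : 1 - x ≠ 0 := by linarith
  have e1 := Real.hasDerivAt_log h0.ne'
  have e2 := (Real.hasDerivAt_log h1').comp_const_sub 1 x
  exact (e1.sub e2).congr_deriv (by field_simp; ring)

lemma second_difference_nonneg_of_convexOn {f : ℝ → ℝ} (hf : ConvexOn ℝ (Set.Icc 0 1) f) {y t : ℝ}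
    (ht : 0 ≤ t) (ht0 : t ≤ y) (ht1 : t ≤ 1 - y) : 0 ≤ f (y + t) - 2 * f y + f (y - t) := by
  have h := hf.2 (show y + t ∈ Set.Icc (0 : ℝ) 1 from ⟨by linarith, by linarith⟩)
    (show y - t ∈ Set.Icc (0 : ℝ) 1 from ⟨by linarith, by linarith⟩)
    (show (0 : ℝ) ≤ 1 / 2 by norm_num) (show (0 : ℝ) ≤ 1 / 2 by norm_num) (by norm_num)
  simp only [smul_eq_mul] at h
  rw [show 1 / 2 * (y + t) + 1 / 2 * (y - t) = y by ring] at h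
  linarith

lemma convexOn_add_negEntropy {g g' g'' : ℝ → ℝ} (h1 : ∀ s, HasDerivAt g (g' s) s)
    (h2 : ∀ s, HasDerivAt g' (g'' s) s)
    {c : ℝ}
    (h : ∀ x ∈ Set.Ioo (0 : ℝ) 1, -c ≤ x * (1 - x) * g'' x) :
    ConvexOn ℝ (Set.Icc 0 1) (fun x => g x + c * negEntropy x) := by
  refine convexOn_of_hasDerivWithinAt2_nonneg (convex_Icc 0 1)
    (f' := fun x => g' x + c * (Real.log x - Real.log (1 - x)))
    (f'' := fun x => g'' x + c * (1 / (x * (1 - x)))) ?_ ?_ ?_ ?_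
  · exact fun x _ => ((h1 x).continuousAt.add
      (continuous_const.mul continuous_negEntropy).continuousAt).continuousWithinAt
  · intro x hx
    rw [interior_Icc] at hx
    exact ((h1 x).add ((hasDerivAt_negEntropy hx.1 hx.2).const_mul c)).hasDerivWithinAt
  · intro x hx
    rw [interior_Icc] at hx
    exact ((h2 x).add ((hasDerivAt_negEntropy_deriv hx.1 hx.2).const_mul c)).hasDerivWithinAt
  · intro x hx
    rw [interior_Icc] at hx
    have hp : 0 < x * (1 - x) := mul_pos hx.1 (by linarith [hx.2])
    have := h x hx
    have hx0 : x ≠ 0 := hx.1.ne'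
    have hx1 : 1 - x ≠ 0 := by linarith [hx.2]
    have e : g'' x + c * (1 / (x * (1 - x))) = (x * (1 - x) * g'' x + c) / (x * (1 - x)) := by
      field_simp
    rw [e]
    apply div_nonneg _ hp.le
    linarith

lemma abs_second_difference_le {g g' g'' : ℝ → ℝ} (h1 : ∀ s, HasDerivAt g (g' s) s)
    (h2 : ∀ s, HasDerivAt g' (g'' s) s)
    {c : ℝ}
    (h : ∀ x ∈ Set.Ioo (0 : ℝ) 1, |x * (1 - x) * g'' x| ≤ c) {y t : ℝ} (h0 : 0 < y) (h1y : y < 1)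
    (ht : 0 ≤ t) (ht0 : t ≤ y) (ht1 : t ≤ 1 - y) :
    |g (y + t) - 2 * g y + g (y - t)| ≤ 2 * c * (t ^ 2 / (y * (1 - y))) := by
  have hc : 0 ≤ c := (abs_nonneg _).trans (h y ⟨h0, h1y⟩)
  have e1 := second_difference_nonneg_of_convexOn
    (convexOn_add_negEntropy h1 h2 fun x hx => (abs_le.1 (h x hx)).1) ht ht0 ht1
  have e2 := second_difference_nonneg_of_convexOn
    (convexOn_add_negEntropy (g := fun s => - g s) (fun s => (h1 s).neg) (fun s => (h2 s).neg)
      (c := c) fun x hx => by have := (abs_le.1 (h x hx)).2; linarith) ht ht0 ht1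
  have e3 := mul_le_mul_of_nonneg_left
    (negEntropy_second_difference_bounds h0 h1y ht ht0 ht1).2 hc
  rw [abs_le]
  constructor <;> linarith

lemma bernstein'_eq_bernSum (n : ℕ) (f : ℝ → ℝ) (p : ℝ) :
    bernstein' n f p = bernSum n (fun k => f ((k : ℝ) / n)) p := rfl

lemma grid_mem_Icc {n k : ℕ} (hk : k ≤ n) : (k : ℝ) / n ∈ Set.Icc (0 : ℝ) 1 :=
  ⟨by positivity, div_le_one_of_le₀ (by exact_mod_cast hk) (by positivity)⟩

lemma negEntropy_le {x p : ℝ} (h0 : 0 < p) (h1 : p < 1) (hx0 : 0 ≤ x) (hx1 : x ≤ 1) :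
    negEntropy x ≤
      x * Real.log p + (1 - x) * Real.log (1 - p) + (x - p) ^ 2 / (p * (1 - p)) := by
  have key : ∀ q y : ℝ, 0 < q → 0 ≤ y → y * Real.log y ≤ y * Real.log q + y * (y - q) / q := by
    intro q y hq hy
    rcases hy.eq_or_lt with rfl | hy
    · simp
    · have := Real.log_le_sub_one_of_pos (x := y / q) (by positivity)
      rw [Real.log_div hy.ne' hq.ne'] at this
      have h2 := mul_le_mul_of_nonneg_left this hy.le
      have h3 : y * (y / q - 1) = y * (y - q) / q := by field_simp
      linarith
  have h1' : 0 < 1 - p := by linarith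
  have e1 := key p x h0 hx0
  have e2 := key (1 - p) (1 - x) h1' (by linarith)
  have e3 : (x - p) ^ 2 / (p * (1 - p)) =
      x * (x - p) / p + (1 - x) * (1 - x - (1 - p)) / (1 - p) := by
    field_simp; ring
  rw [e3]
  unfold negEntropy
  linarith

lemma bernSum_negEntropy_le {n : ℕ} (hn : 1 ≤ n) {p : ℝ} (h0 : 0 < p) (h1 : p < 1) :
    bernSum n (fun k => negEntropy ((k : ℝ) / n)) p ≤ negEntropy p + 1 / n := by
  have hn' : (0 : ℝ) < n := by exact_mod_cast hn
  have h1' : 0 < 1 - p := by linarith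
  refine (bernSum_mono n (fun k hk =>
    negEntropy_le h0 h1 (grid_mem_Icc hk).1 (grid_mem_Icc hk).2) h0.le h1.le).trans ?_
  have e : (fun k : ℕ => (k : ℝ) / n * Real.log p + (1 - (k : ℝ) / n) * Real.log (1 - p) +
      ((k : ℝ) / n - p) ^ 2 / (p * (1 - p))) = fun k : ℕ =>
      ((Real.log (1 - p) + p ^ 2 / (p * (1 - p))) +
        ((Real.log p - Real.log (1 - p) - 2 * p / (p * (1 - p))) / n) * (k : ℝ)) +
        (1 / (p * (1 - p) * n ^ 2)) * (k : ℝ) ^ 2 := by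
    funext k; field_simp; ring
  rw [e, bernSum_add, bernSum_add, bernSum_const, bernSum_mul, bernSum_mul, bernSum_id, bernSum_sq]
  apply le_of_eq
  unfold negEntropy
  field_simp
  ring

/-- A supporting line of `F` touching its graph on both sides of `p`. -/
lemma exists_supporting_line {F : ℝ → ℝ} (hF : Continuous F) {p : ℝ} (h0 : 0 < p) (h1 : p < 1) :
    ∃ m c : ℝ, (∀ y ∈ Set.Icc (0 : ℝ) 1, c + m * (y - p) ≤ F y) ∧
      (∃ a ∈ Set.Icc 0 p, F a = c + m * (a - p)) ∧ ∃ b ∈ Set.Icc p 1, F b = c + m * (b - p) := by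
  have hG : Continuous (fun z : ℝ × ℝ => F z.2 - z.1 * (z.2 - p)) := by fun_prop
  have hGm : ∀ m, Continuous (fun y => F y - m * (y - p)) := by intro m; fun_prop
  have cL : Continuous fun m => sInf ((fun y => F y - m * (y - p)) '' Set.Icc 0 p) :=
    isCompact_Icc.continuous_sInf (f := fun m y => F y - m * (y - p)) hG
  have cR : Continuous fun m => sInf ((fun y => F y - m * (y - p)) '' Set.Icc p 1) :=
    isCompact_Icc.continuous_sInf (f := fun m y => F y - m * (y - p)) hG
  obtain ⟨z, hz, hzmin⟩ := isCompact_Icc.exists_isMinOn (Set.nonempty_Icc.2 zero_le_one)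
    (hF.continuousOn (s := Set.Icc (0 : ℝ) 1))
  have hK : ∀ y ∈ Set.Icc (0 : ℝ) 1, F z ≤ F y := fun y hy => hzmin hy
  have nL : (Set.Icc 0 p).Nonempty := Set.nonempty_Icc.2 h0.le
  have nR : (Set.Icc p 1).Nonempty := Set.nonempty_Icc.2 h1.le
  have bL : ∀ m, BddBelow ((fun y => F y - m * (y - p)) '' Set.Icc 0 p) := fun m =>
    isCompact_Icc.bddBelow_image (hGm m).continuousOn
  have bR : ∀ m, BddBelow ((fun y => F y - m * (y - p)) '' Set.Icc p 1) := fun m =>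
    isCompact_Icc.bddBelow_image (hGm m).continuousOn
  have h1' : 0 < 1 - p := by linarith
  obtain ⟨m, hm⟩ : ∃ m, sInf ((fun y => F y - m * (y - p)) '' Set.Icc 0 p) =
      sInf ((fun y => F y - m * (y - p)) '' Set.Icc p 1) := by
    refine intermediate_value_univ₂ (a := -((F 0 - F z) / p)) (b := (F 1 - F z) / (1 - p)) cL cR ?_ ?_
    · refine (csInf_le (bL _) ⟨0, ⟨le_rfl, h0.le⟩, rfl⟩).trans (le_csInf (nR.image _) ?_)
      rintro _ ⟨y, hy, rfl⟩
      have e : 0 ≤ (F 0 - F z) / p := div_nonneg (by linarith [hK 0 (by simp)]) h0.le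
      have e2 : (F 0 - F z) / p * p = F 0 - F z := by field_simp
      have := hK y ⟨by linarith [hy.1], hy.2⟩
      have := mul_nonneg e (sub_nonneg.2 hy.1)
      simp only []
      linarith
    · refine (csInf_le (bR _) ⟨1, ⟨h1.le, le_rfl⟩, rfl⟩).trans (le_csInf (nL.image _) ?_)
      rintro _ ⟨y, hy, rfl⟩
      have e : 0 ≤ (F 1 - F z) / (1 - p) := div_nonneg (by linarith [hK 1 (by simp)]) h1'.le
      have e2 : (F 1 - F z) / (1 - p) * (1 - p) = F 1 - F z := by field_simp
      have := hK y ⟨hy.1, by linarith [hy.2]⟩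
      have := mul_nonneg e (sub_nonneg.2 hy.2)
      simp only []
      linarith
  refine ⟨m, sInf ((fun y => F y - m * (y - p)) '' Set.Icc 0 p), ?_, ?_, ?_⟩
  · intro y hy
    rcases le_total y p with h | h
    · have := csInf_le (bL m) ⟨y, ⟨hy.1, h⟩, rfl⟩
      linarith
    · have := csInf_le (bR m) ⟨y, ⟨h, hy.2⟩, rfl⟩
      linarith
  · obtain ⟨a, ha, he⟩ := isCompact_Icc.exists_sInf_image_eq nL (hGm m).continuousOn
    exact ⟨a, ha, by rw [he]; ring⟩
  · obtain ⟨b, hb, he⟩ := isCompact_Icc.exists_sInf_image_eq nR (hGm m).continuousOn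
    exact ⟨b, hb, by rw [hm, he]; ring⟩

lemma bernSum_zero_right (n : ℕ) (a : ℕ → ℝ) : bernSum n a 0 = a 0 := by
  induction n with
  | zero => exact bernSum_zero a 0
  | succ n ih => rw [bernSum_succ, ih]; ring

lemma bernSum_one_right (n : ℕ) (a : ℕ → ℝ) : bernSum n a 1 = a n := by
  have h := bernSum_reflect n (fun k => a (n - k)) 1
  rw [sub_self, bernSum_zero_right, Nat.sub_zero] at h
  rw [← h]
  exact bernSum_congr n (fun k hk => by rw [Nat.sub_sub_self hk]) 1

lemma sub_three_mul_le_bernSum {f : ℝ → ℝ} (hf : Continuous f) {n : ℕ} (hn : 1 ≤ n) {W : ℝ}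
    (hW : 0 < W) (h : ∀ y t : ℝ, 0 < y → y < 1 → 0 < t → t ≤ y → t ≤ 1 - y →
      t ^ 2 ≤ y * (1 - y) / n → -W ≤ f (y + t) - 2 * f y + f (y - t))
    {p : ℝ} (h0 : 0 < p) (h1 : p < 1) :
    f p - 3 * W ≤ bernSum n (fun k => f ((k : ℝ) / n)) p := by
  have hn' : (0 : ℝ) < n := by exact_mod_cast hn
  set F : ℝ → ℝ := fun x => f x + 2 * n * W * negEntropy x with hFdef
  have hF : Continuous F := hf.add (continuous_const.mul continuous_negEntropy)
  obtain ⟨m, c, hl, ⟨a, ha, hae⟩, b, hb, hbe⟩ := exists_supporting_line hF h0 h1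
  have hc : F p - W ≤ c := by
    obtain ⟨y, hy, hmax⟩ := isCompact_Icc.exists_isMaxOn (s := Set.Icc a b)
      (f := fun x => F x - (c + m * (x - p))) ⟨p, ha.2, hb.1⟩ (by fun_prop)
    have hmax' : ∀ x ∈ Set.Icc a b,
      F x - (c + m * (x - p)) ≤ F y - (c + m * (y - p)) := fun x hx => hmax hx
    have hp := hmax' p ⟨ha.2, hb.1⟩
    by_contra! hcon
    have hWy : W < F y - (c + m * (y - p)) := by linarith
    have hya : a < y := by
      rcases hy.1.eq_or_lt with e | e
      · rw [← e] at hWy; linarith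
      · exact e
    have hyb : y < b := by
      rcases hy.2.eq_or_lt with e | e
      · rw [e] at hWy; linarith
      · exact e
    have hy0 : 0 < y := ha.1.trans_lt hya
    have hy1 : y < 1 := hyb.trans_le hb.2
    have hv : 0 < y * (1 - y) := mul_pos hy0 (by linarith)
    have hs : 0 < Real.sqrt (y * (1 - y) / n) := Real.sqrt_pos.2 (by positivity)
    set τ := min (Real.sqrt (y * (1 - y) / n)) (min (y - a) (b - y)) with hτ
    have t0 : 0 < τ := lt_min hs (lt_min (by linarith) (by linarith))
    have t1 : τ ≤ Real.sqrt (y * (1 - y) / n) := min_le_left _ _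
    have t2 : τ ≤ y - a := (min_le_right _ _).trans (min_le_left _ _)
    have t3 : τ ≤ b - y := (min_le_right _ _).trans (min_le_right _ _)
    have ty : τ ≤ y := by linarith [ha.1]
    have ty1 : τ ≤ 1 - y := by linarith [hb.2]
    have tsq : τ ^ 2 ≤ y * (1 - y) / n := by
      rw [← Real.sq_sqrt (show 0 ≤ y * (1 - y) / n by positivity)]
      gcongr
    have d1 := h y τ hy0 hy1 t0 ty ty1 tsq
    have d2 := mul_le_mul_of_nonneg_left
      (negEntropy_second_difference_bounds hy0 hy1 t0.le ty ty1).1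
      (show 0 ≤ 2 * n * W by positivity)
    have d3 : 0 ≤ 2 * n * W * (τ ^ 2 / (y * (1 - y))) := by positivity
    have dF : F (y + τ) - 2 * F y + F (y - τ) = (f (y + τ) - 2 * f y + f (y - τ)) +
        2 * n * W * (negEntropy (y + τ) - 2 * negEntropy y + negEntropy (y - τ)) := by
      simp only [hFdef]; ring
    have u1 := hmax' (y + τ) ⟨by linarith, by linarith⟩
    have u2 := hmax' (y - τ) ⟨by linarith, by linarith⟩
    rcases min_choice (Real.sqrt (y * (1 - y) / n)) (min (y - a) (b - y)) with e | e
    · have e' : τ ^ 2 = y * (1 - y) / n := by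
        rw [hτ, e, Real.sq_sqrt (by positivity)]
      have : 2 * n * W * (τ ^ 2 / (y * (1 - y))) = 2 * W := by
        have hy1' : 1 - y ≠ 0 := by linarith
        rw [e']; field_simp
      linarith
    · rcases min_choice (y - a) (b - y) with e2 | e2
      · have e' : y - τ = a := by rw [hτ, e, e2]; ring
        have e3 : F (y - τ) = c + m * (y - τ - p) := by rw [e', hae]
        linarith
      · have e' : y + τ = b := by rw [hτ, e, e2]; ring
        have e3 : F (y + τ) = c + m * (y + τ - p) := by rw [e', hbe]
        linarith
  have k1 : c ≤ bernSum n (fun k => F ((k : ℝ) / n)) p := by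
    have e1 : bernSum n (fun k : ℕ => (c - m * p) + m / n * (k : ℝ)) p = c := by
      rw [bernSum_add, bernSum_const, bernSum_mul, bernSum_id]; field_simp; ring
    rw [← e1]
    refine bernSum_mono n (fun k hk => ?_) h0.le h1.le
    have := hl _ (grid_mem_Icc hk)
    calc _ = c + m * ((k : ℝ) / n - p) := by ring
      _ ≤ _ := this
  have k2 : bernSum n (fun k => F ((k : ℝ) / n)) p = bernSum n (fun k => f ((k : ℝ) / n)) p +
      2 * n * W * bernSum n (fun k => negEntropy ((k : ℝ) / n)) p := by
    rw [← bernSum_mul, ← bernSum_add]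
  have k3 := mul_le_mul_of_nonneg_left (bernSum_negEntropy_le hn h0 h1)
    (show 0 ≤ 2 * n * W by positivity)
  have k4 : 2 * n * W * (1 / n) = 2 * W := by field_simp
  simp only [hFdef] at hc
  linarith

lemma ditzSymmDiff_two (h : ℝ) (f : ℝ → ℝ) (x : ℝ) : ditzSymmDiff 2 h f x =
    if x - h ∈ Set.Icc (0 : ℝ) 1 ∧ x + h ∈ Set.Icc (0 : ℝ) 1 then
      f (x + h) - 2 * f x + f (x - h) else 0 := by
  unfold ditzSymmDiff
  have e : ((2 : ℕ) : ℝ) * h / 2 = h := by push_cast; ring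
  rw [e]
  refine if_congr Iff.rfl ?_ rfl
  rw [Finset.sum_range_succ, Finset.sum_range_succ, Finset.sum_range_one]
  have e1 : x + h - ((0 : ℕ) : ℝ) * h = x + h := by push_cast; ring
  have e2 : x + h - ((1 : ℕ) : ℝ) * h = x := by push_cast; ring
  have e3 : x + h - ((2 : ℕ) : ℝ) * h = x - h := by push_cast; ring
  rw [e1, e2, e3]
  norm_num
  ring

lemma abs_ditzSymmDiff_two_le {f : ℝ → ℝ} {M : ℝ} (hM : ∀ x ∈ Set.Icc (0 : ℝ) 1, |f x| ≤ M)
    (h : ℝ) {x : ℝ} (hx : x ∈ Set.Icc (0 : ℝ) 1) : |ditzSymmDiff 2 h f x| ≤ 4 * M := by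
  rw [ditzSymmDiff_two]
  have hb := hM x hx
  split_ifs with hh
  · have h1 := hM _ hh.1
    have h2 := hM _ hh.2
    rw [abs_le] at *
    constructor <;> linarith
  · have := (abs_nonneg _).trans hb
    rw [abs_zero]
    linarith

lemma bddAbove_dtMod {f : ℝ → ℝ} (hf : ContinuousOn f (Set.Icc 0 1)) (t : ℝ) :
    BddAbove {y : ℝ | ∃ h x : ℝ, 0 < h ∧ h ≤ t ∧ x ∈ Set.Icc (0:ℝ) 1 ∧
      y = |ditzSymmDiff 2 (h * Real.sqrt (x * (1 - x))) f x|} := by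
  obtain ⟨M, hM⟩ := isCompact_Icc.exists_bound_of_continuousOn hf
  refine ⟨4 * M, ?_⟩
  rintro _ ⟨h, x, -, -, hx, rfl⟩
  exact abs_ditzSymmDiff_two_le hM _ hx

lemma dtMod_nonneg (r : ℕ) (f : ℝ → ℝ) (t : ℝ) : 0 ≤ dtMod r f t := by
  refine Real.sSup_nonneg ?_
  rintro _ ⟨h, x, -, -, -, rfl⟩
  exact abs_nonneg _

lemma abs_second_difference_le_dtMod {f : ℝ → ℝ} (hf : ContinuousOn f (Set.Icc 0 1)) {n : ℕ}
    {y t : ℝ} (hy0 : 0 < y) (hy1 : y < 1) (ht : 0 < t) (ht0 : t ≤ y) (ht1 : t ≤ 1 - y)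
    (h : t ^ 2 ≤ y * (1 - y) / n) :
    |f (y + t) - 2 * f y + f (y - t)| ≤ dtMod 2 f (1 / Real.sqrt n) := by
  have hv : 0 < y * (1 - y) := mul_pos hy0 (by linarith)
  have hs : 0 < Real.sqrt (y * (1 - y)) := Real.sqrt_pos.2 hv
  have e : t / Real.sqrt (y * (1 - y)) * Real.sqrt (y * (1 - y)) = t := by field_simp
  refine le_csSup (bddAbove_dtMod hf _)
    ⟨t / Real.sqrt (y * (1 - y)), y, by positivity, ?_, ⟨hy0.le, hy1.le⟩, ?_⟩
  · rw [div_le_iff₀ hs, one_div, ← div_eq_inv_mul, ← Real.sqrt_div hv.le]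
    exact Real.le_sqrt_of_sq_le h
  · rw [e, ditzSymmDiff_two, if_pos]
    constructor <;> constructor <;> linarith

lemma abs_bernstein'_sub_le {f : ℝ → ℝ} (hf : ContinuousOn f (Set.Icc 0 1)) {n : ℕ} (hn : 1 ≤ n)
    {p : ℝ} (hp : p ∈ Set.Icc (0 : ℝ) 1) :
    |bernstein' n f p - f p| ≤ 3 * dtMod 2 f (1 / Real.sqrt n) := by
  have hn' : (n : ℝ) ≠ 0 := by positivity
  have hd := dtMod_nonneg 2 f (1 / Real.sqrt n)
  rw [bernstein'_eq_bernSum]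
  rcases hp.1.eq_or_lt with rfl | h0
  · rw [bernSum_zero_right]; simpa using hd
  rcases hp.2.eq_or_lt with rfl | h1
  · rw [bernSum_one_right, div_self hn']; simpa using hd
  set g : ℝ → ℝ := Set.IccExtend zero_le_one ((Set.Icc (0 : ℝ) 1).domRestrict f) with hg
  have hgc : Continuous g := (continuousOn_iff_continuous_domRestrict.1 hf).Icc_extend'
  have hgf : ∀ x ∈ Set.Icc (0 : ℝ) 1, g x = f x := fun x hx => by
    rw [hg, Set.IccExtend_of_mem _ _ hx]; rfl
  have hB : bernSum n (fun k => f ((k : ℝ) / n)) p = bernSum n (fun k => g ((k : ℝ) / n)) p :=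
    bernSum_congr n (fun k hk => (hgf _ (grid_mem_Icc hk)).symm) p
  rw [hB, ← hgf p hp]
  refine le_of_forall_pos_le_add fun ε hε => ?_
  have hW : 0 < dtMod 2 f (1 / Real.sqrt n) + ε / 3 := by positivity
  have key : ∀ y t : ℝ, 0 < y → y < 1 → 0 < t → t ≤ y → t ≤ 1 - y →
      t ^ 2 ≤ y * (1 - y) / n →
      |g (y + t) - 2 * g y + g (y - t)| ≤ dtMod 2 f (1 / Real.sqrt n) + ε / 3 := by
    intro y t hy0 hy1 ht ht0 ht1 h
    rw [hgf y ⟨hy0.le, hy1.le⟩, hgf (y + t) ⟨by linarith, by linarith⟩,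
      hgf (y - t) ⟨by linarith, by linarith⟩]
    have := abs_second_difference_le_dtMod hf hy0 hy1 ht ht0 ht1 h
    linarith
  have l1 := sub_three_mul_le_bernSum hgc hn hW
    (fun y t a b c d e h => (abs_le.1 (key y t a b c d e h)).1) h0 h1
  have l2 := sub_three_mul_le_bernSum hgc.neg hn hW
    (fun y t a b c d e h => by
      have := (abs_le.1 (key y t a b c d e h)).2
      simp only [Pi.neg_apply]
      linarith) h0 h1
  simp only [Pi.neg_apply, bernSum_neg] at l2
  rw [abs_le]
  constructor <;> linarith

/-- The hinge sequence `(k - (i + 1))₊`, whose second difference is the indicator of `i`. -/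
def hinge (i k : ℕ) : ℝ := ((k - (i + 1) : ℕ) : ℝ)

lemma hinge_of_le {i k : ℕ} (h : k ≤ i + 1) : hinge i k = 0 := by
  unfold hinge; rw [Nat.sub_eq_zero_of_le h, Nat.cast_zero]

lemma hinge_of_ge {i k : ℕ} (h : i + 1 ≤ k) : hinge i k = (k : ℝ) - (i + 1) := by
  unfold hinge; rw [Nat.cast_sub h]; push_cast; ring

lemma secondDiff_hinge (i k : ℕ) : secondDiff (hinge i) k = if i = k then 1 else 0 := by
  unfold secondDiff
  rcases lt_trichotomy i k with h | rfl | h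
  · rw [if_neg h.ne, hinge_of_ge (by omega), hinge_of_ge (by omega), hinge_of_ge (by omega)]
    push_cast; ring
  · rw [if_pos rfl, hinge_of_ge (by omega), hinge_of_le (by omega), hinge_of_le (by omega)]
    push_cast; ring
  · rw [if_neg h.ne', hinge_of_le (by omega), hinge_of_le (by omega), hinge_of_le (by omega)]
    ring

lemma eq_sum_hinge (a : ℕ → ℝ) (m : ℕ) : ∀ j ≤ m + 2, a j = a 0 + j * (a 1 - a 0) +
    ∑ i ∈ Finset.range (m + 1), secondDiff a i * hinge i j := by
  intro j
  induction j using Nat.twoStepInduction with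
  | zero =>
    intro _
    rw [Finset.sum_eq_zero fun i _ => by rw [hinge_of_le (by omega), mul_zero]]
    simp
  | one =>
    intro _
    rw [Finset.sum_eq_zero fun i _ => by rw [hinge_of_le (by omega), mul_zero]]
    simp
  | more j ih1 ih2 =>
    intro hj
    have e1 := ih1 (by omega)
    have e2 := ih2 (by omega)
    have e3 : ∑ i ∈ Finset.range (m + 1), secondDiff a i * secondDiff (hinge i) j =
        secondDiff a j := by
      simp only [secondDiff_hinge, mul_ite, mul_one, mul_zero, Finset.sum_ite_eq']
      rw [if_pos (Finset.mem_range.2 (by omega))]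
    have e4 : ∑ i ∈ Finset.range (m + 1), secondDiff a i * hinge i (j + 2) =
        secondDiff a j + 2 * ∑ i ∈ Finset.range (m + 1), secondDiff a i * hinge i (j + 1) -
        ∑ i ∈ Finset.range (m + 1), secondDiff a i * hinge i j := by
      rw [← e3, Finset.mul_sum, ← Finset.sum_add_distrib, ← Finset.sum_sub_distrib]
      refine Finset.sum_congr rfl fun i _ => ?_
      rw [show secondDiff (hinge i) j = hinge i (j + 2) - 2 * hinge i (j + 1) + hinge i j from rfl]
      ring
    rw [e4]
    have e5 : a (j + 2) = secondDiff a j + 2 * a (j + 1) - a j := by unfold secondDiff; ring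
    push_cast at e2 ⊢
    linarith

lemma bernGrid_eq_sum_hinge (a : ℕ → ℝ) (m j : ℕ) : bernGrid (m + 2) a j =
    a 0 + j * (a 1 - a 0) +
    ∑ i ∈ Finset.range (m + 1), secondDiff a i * bernGrid (m + 2) (hinge i) j := by
  unfold bernGrid
  rw [bernSum_congr (m + 2) (eq_sum_hinge a m)]
  have e : ∀ k : ℕ, (k : ℝ) * (a 1 - a 0) = (a 1 - a 0) * k := fun k => mul_comm _ _
  simp only [e]
  rw [bernSum_add, bernSum_add, bernSum_const, bernSum_mul, bernSum_id, bernSum_sum]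
  simp only [bernSum_mul]
  have : ((m + 2 : ℕ) : ℝ) ≠ 0 := by positivity
  rw [mul_div_cancel₀ _ this]

lemma bernGrid_sub_eq_sum (a : ℕ → ℝ) {m j : ℕ} (hj : j ≤ m + 2) : bernGrid (m + 2) a j - a j =
    ∑ i ∈ Finset.range (m + 1), secondDiff a i * (bernGrid (m + 2) (hinge i) j - hinge i j) := by
  rw [bernGrid_eq_sum_hinge a m j, eq_sum_hinge a m j hj]
  simp only [mul_sub, Finset.sum_sub_distrib]
  ring

lemma secondDiff_bernGrid_eq_sum (a : ℕ → ℝ) (m l : ℕ) : secondDiff (bernGrid (m + 2) a) l =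
    ∑ i ∈ Finset.range (m + 1), secondDiff a i * secondDiff (bernGrid (m + 2) (hinge i)) l := by
  have e : ∀ i, secondDiff (bernGrid (m + 2) (hinge i)) l = bernGrid (m + 2) (hinge i) (l + 2) -
    2 * bernGrid (m + 2) (hinge i) (l + 1) + bernGrid (m + 2) (hinge i) l := fun i => rfl
  simp only [e, mul_add, mul_sub, Finset.sum_add_distrib, Finset.sum_sub_distrib,
    mul_left_comm _ (2 : ℝ), ← Finset.mul_sum]
  unfold secondDiff
  rw [bernGrid_eq_sum_hinge a m (l + 2), bernGrid_eq_sum_hinge a m (l + 1),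
    bernGrid_eq_sum_hinge a m l]
  unfold secondDiff
  push_cast
  ring

lemma bernWeight_succ_mul {n k : ℕ} (hk : k ≤ n) (x : ℝ) :
    (1 - x) * (k + 1) * bernWeight n (k + 1) x = x * (n - k) * bernWeight n k x := by
  unfold bernWeight
  rcases hk.eq_or_lt with rfl | hk
  · simp
  · obtain ⟨r, rfl⟩ : ∃ r, n = k + 1 + r := ⟨n - (k + 1), by omega⟩
    have h := Nat.choose_succ_right_eq (k + 1 + r) k
    rw [show k + 1 + r - k = r + 1 by omega] at h
    have h' : ((k + 1 + r).choose (k + 1) : ℝ) * (k + 1) = ((k + 1 + r).choose k : ℝ) * (r + 1) := by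
      exact_mod_cast h
    rw [show k + 1 + r - (k + 1) = r by omega, show k + 1 + r - k = r + 1 by omega]
    push_cast
    linear_combination (1 - x) ^ (r + 1) * x ^ (k + 1) * h'

lemma sum_bernWeight_mul_sub (n : ℕ) (x : ℝ) : ∀ K ≤ n + 1,
    ∑ k ∈ Finset.range K, bernWeight n k x * (k - n * x) = -((1 - x) * K * bernWeight n K x) := by
  intro K
  induction K with
  | zero => simp
  | succ K ih =>
    intro hK
    rw [Finset.sum_range_succ, ih (by omega)]
    have := bernWeight_succ_mul (show K ≤ n by omega) x
    push_cast
    linear_combination this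

lemma sum_bernWeight_indicator (n : ℕ) (c : ℕ → ℝ) {K : ℕ} (hK : K ≤ n + 1) (x : ℝ) :
    bernSum n (fun k => if k < K then c k else 0) x =
      ∑ k ∈ Finset.range K, bernWeight n k x * c k := by
  unfold bernSum
  simp only [mul_ite, mul_zero]
  rw [← Finset.sum_filter]
  refine Finset.sum_congr ?_ fun _ _ => rfl
  ext k
  simp only [Finset.mem_filter, Finset.mem_range]
  omega

lemma bernGrid_hinge_sub_le {m i j : ℕ} (hi : i ≤ m) (hj : j ≤ m + 2) :
    bernGrid (m + 2) (hinge i) j - hinge i j ≤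
      (i + 1) * (m + 1 - i) / (m + 2) * bernWeight (m + 2) (i + 1) ((j : ℝ) / (m + 2 : ℕ)) := by
  unfold bernGrid
  have hN : (0 : ℝ) < (m + 2 : ℕ) := by positivity
  set x := (j : ℝ) / (m + 2 : ℕ) with hx
  have hjx : ((m + 2 : ℕ) : ℝ) * x = j := by rw [hx]; field_simp
  have hx0 : 0 ≤ x := by positivity
  have hjN : (j : ℝ) ≤ (m + 2 : ℕ) := by exact_mod_cast hj
  have hx1 : x ≤ 1 := (div_le_one hN).2 hjN
  have hiN : (i : ℝ) + 1 ≤ (m + 2 : ℕ) := by exact_mod_cast (by omega : i + 1 ≤ m + 2)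
  have hw := bernWeight_nonneg (m + 2) (i + 1) hx0 hx1
  rcases le_total j (i + 1) with h | h
  · have hle : bernSum (m + 2) (hinge i) x ≤ bernSum (m + 2)
        (fun k => ((k : ℝ) - (m + 2 : ℕ) * x) -
          if k < i + 1 + 1 then ((k : ℝ) - (m + 2 : ℕ) * x) else 0) x := by
      refine bernSum_mono _ (fun k _ => ?_) hx0 hx1
      have h' : (j : ℝ) ≤ i + 1 := by exact_mod_cast h
      split_ifs with hk
      · rw [hinge_of_le (by omega), sub_self]
      · rw [hinge_of_ge (by omega), hjx]
        linarith
    rw [bernSum_sub, sum_bernWeight_indicator _ _ (by omega), bernSum_sub, bernSum_id,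
      bernSum_const, sum_bernWeight_mul_sub _ _ _ (by omega)] at hle
    have e := bernWeight_succ_mul (show i + 1 ≤ m + 2 by omega) x
    rw [hinge_of_le h]
    have h' : x ≤ (i + 1) / (m + 2) := by
      rw [hx]; push_cast; gcongr; exact_mod_cast h
    have e2 : 0 ≤ ((m : ℝ) + 1 - i) * bernWeight (m + 2) (i + 1) x := by
      push_cast at hiN
      exact mul_nonneg (by linarith) hw
    have e3 := mul_le_mul_of_nonneg_right h' e2
    have e4 : ((i : ℝ) + 1) * (m + 1 - i) / (m + 2) * bernWeight (m + 2) (i + 1) x =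
      (i + 1) / (m + 2) * ((m + 1 - i) * bernWeight (m + 2) (i + 1) x) := by ring
    rw [e4]
    push_cast at e hle
    linarith
  · have hle : bernSum (m + 2) (hinge i) x ≤ bernSum (m + 2)
        (fun k => ((k : ℝ) - (i + 1)) -
          if k < i + 1 then ((k : ℝ) - (m + 2 : ℕ) * x) else 0) x := by
      refine bernSum_mono _ (fun k _ => ?_) hx0 hx1
      have h' : (i : ℝ) + 1 ≤ j := by exact_mod_cast h
      split_ifs with hk
      · rw [hinge_of_le (by omega), hjx]
        linarith
      · rw [hinge_of_ge (by omega)]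
        linarith
    rw [bernSum_sub, sum_bernWeight_indicator _ _ (by omega), bernSum_sub, bernSum_id,
      bernSum_const, sum_bernWeight_mul_sub _ _ _ (by omega)] at hle
    rw [hinge_of_ge h]
    have h' : 1 - x ≤ (m + 1 - i) / (m + 2) := by
      have : (i + 1 : ℝ) / (m + 2 : ℕ) ≤ x := by rw [hx]; gcongr; exact_mod_cast h
      push_cast at this
      have e : ((m : ℝ) + 1 - i) / (m + 2) = 1 - (i + 1) / (m + 2) := by field_simp; ring
      rw [e]; linarith
    have e2 : 0 ≤ ((i : ℝ) + 1) * bernWeight (m + 2) (i + 1) x := by positivity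
    have e3 := mul_le_mul_of_nonneg_right h' e2
    have e4 : ((i : ℝ) + 1) * (m + 1 - i) / (m + 2) * bernWeight (m + 2) (i + 1) x =
      (m + 1 - i) / (m + 2) * ((i + 1) * bernWeight (m + 2) (i + 1) x) := by ring
    rw [e4]
    push_cast at hjx hle
    linarith

lemma bernGrid_hinge_sub_nonneg {m j : ℕ} (i : ℕ) (hj : j ≤ m + 2) :
    0 ≤ bernGrid (m + 2) (hinge i) j - hinge i j := by
  unfold bernGrid
  have hN : (0 : ℝ) < (m + 2 : ℕ) := by positivity
  have hx0 : 0 ≤ (j : ℝ) / (m + 2 : ℕ) := by positivity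
  have hx1 : (j : ℝ) / (m + 2 : ℕ) ≤ 1 := (div_le_one hN).2 (by exact_mod_cast hj)
  rw [sub_nonneg]
  rcases le_total j (i + 1) with h | h
  · rw [hinge_of_le h, ← bernSum_const (m + 2) 0 ((j : ℝ) / (m + 2 : ℕ))]
    exact bernSum_mono _ (fun k _ => by unfold hinge; positivity) hx0 hx1
  · have e : hinge i j = bernSum (m + 2) (fun k => (k : ℝ) - (i + 1)) ((j : ℝ) / (m + 2 : ℕ)) := by
      rw [bernSum_sub, bernSum_id, bernSum_const, mul_div_cancel₀ _ hN.ne', hinge_of_ge h]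
    rw [e]
    refine bernSum_mono _ (fun k _ => ?_) hx0 hx1
    rcases le_total k (i + 1) with hk | hk
    · rw [hinge_of_le hk]
      have : (k : ℝ) ≤ i + 1 := by exact_mod_cast hk
      linarith
    · rw [hinge_of_ge hk]

lemma one_sub_mul_pow_le {y s : ℝ} {r : ℕ} (hy : 0 < y) (hr : (r : ℝ) ≤ y) (hs0 : 0 ≤ s)
    (hsy : s ≤ y) : (1 - s) * y ^ r ≤ (y - s) ^ r := by
  have h := one_add_mul_le_pow (a := -(s / y)) (by
    have : s / y ≤ 1 := (div_le_one hy).2 hsy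
    linarith) r
  have e : (y - s) ^ r = (1 + -(s / y)) ^ r * y ^ r := by
    rw [← mul_pow]; congr 1; field_simp; ring
  rw [e]
  refine mul_le_mul_of_nonneg_right (le_trans ?_ h) (by positivity)
  have : r * (s / y) ≤ s := by
    rw [← mul_div_assoc, div_le_iff₀ hy, mul_comm]
    exact mul_le_mul_of_nonneg_left hr hs0
  linarith

lemma hasDerivAt_bernSum_div (m : ℕ) (a : ℕ → ℝ) (s : ℝ) :
    HasDerivAt (fun s => bernSum (m + 2) a (s / (m + 2 : ℕ)))
      (((m + 1 : ℕ) + 1) * bernSum (m + 1) (fun k => a (k + 1) - a k) (s / (m + 2 : ℕ)) /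
        (m + 2 : ℕ)) s := by
  have h := (hasDerivAt_bernSum (m + 1) a (s / (m + 2 : ℕ))).comp s
    ((hasDerivAt_id s).div_const ((m + 2 : ℕ) : ℝ))
  refine h.congr_deriv ?_
  rw [mul_one_div]

lemma hasDerivAt_bernSum_div_deriv (m : ℕ) (a : ℕ → ℝ) (s : ℝ) :
    HasDerivAt (fun s => ((m + 1 : ℕ) + 1) *
      bernSum (m + 1) (fun k => a (k + 1) - a k) (s / (m + 2 : ℕ)) / (m + 2 : ℕ))
      (bernSum₂ m a (s / (m + 2 : ℕ)) / ((m + 2 : ℕ) : ℝ) ^ 2) s := by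
  have h := ((hasDerivAt_bernSum_deriv m a (s / (m + 2 : ℕ))).comp s
    ((hasDerivAt_id s).div_const ((m + 2 : ℕ) : ℝ))).div_const ((m + 2 : ℕ) : ℝ)
  refine h.congr_deriv ?_
  rw [mul_one_div, div_div, sq]

lemma bernSum₂_hinge {m i : ℕ} (hi : i ≤ m) (x : ℝ) :
    bernSum₂ m (hinge i) x = (m + 2) * ((m + 1) * bernWeight m i x) := by
  unfold bernSum₂ bernSum
  simp only [secondDiff_hinge, mul_ite, mul_one, mul_zero, Finset.sum_ite_eq]
  rw [if_pos (Finset.mem_range.2 (by omega))]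

lemma secondDiff_bernGrid_eq (m : ℕ) (a : ℕ → ℝ) (l : ℕ) : secondDiff (bernGrid (m + 2) a) l =
    bernSum (m + 2) a (((l + 1 : ℝ) + 1) / (m + 2 : ℕ)) -
      2 * bernSum (m + 2) a ((l + 1 : ℝ) / (m + 2 : ℕ)) +
      bernSum (m + 2) a (((l + 1 : ℝ) - 1) / (m + 2 : ℕ)) := by
  unfold secondDiff bernGrid
  have e1 : ((l + 2 : ℕ) : ℝ) = (l + 1 : ℝ) + 1 := by push_cast; ring
  have e2 : ((l + 1 : ℕ) : ℝ) = (l + 1 : ℝ) := by push_cast; ring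
  have e3 : (l : ℝ) = (l + 1 : ℝ) - 1 := by ring
  rw [e1, e2, ← e3]

lemma bernWeight_div_eq {m i N : ℕ} (hN : 0 < N) (hi : i ≤ m) (s : ℝ) :
    bernWeight m i (s / N) = m.choose i / (N : ℝ) ^ m * (s ^ i * (N - s) ^ (m - i)) := by
  obtain ⟨r, rfl⟩ : ∃ r, m = i + r := ⟨m - i, by omega⟩
  have hN' : (N : ℝ) ≠ 0 := by positivity
  have e : 1 - s / N = (N - s) / N := by field_simp
  unfold bernWeight
  rw [e, Nat.add_sub_cancel_left, div_pow, div_pow, pow_add]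
  field_simp

lemma one_sub_mul_bernWeight_le {m i l : ℕ} (hi : i ≤ m) (hl : l ≤ m) {s : ℝ}
    (hs : s ∈ Set.Ioo (0 : ℝ) 1) :
    (1 - s) * bernWeight m i ((l + 1 : ℝ) / (m + 2 : ℕ)) ≤
      bernWeight m i ((l + 1 + s : ℝ) / (m + 2 : ℕ)) +
        bernWeight m i ((l + 1 - s : ℝ) / (m + 2 : ℕ)) := by
  obtain ⟨h0, h1⟩ := hs
  have hl0 : (0 : ℝ) ≤ l := l.cast_nonneg
  have hlm : (l : ℝ) ≤ m := by exact_mod_cast hl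
  have hN : (0 : ℝ) < (m + 2 : ℕ) := by positivity
  have hNe : ((m + 2 : ℕ) : ℝ) = m + 2 := by push_cast; ring
  have w1 : 0 ≤ bernWeight m i ((l + 1 + s : ℝ) / (m + 2 : ℕ)) :=
    bernWeight_nonneg _ _ (by positivity) ((div_le_one hN).2 (by rw [hNe]; linarith))
  have w2 : 0 ≤ bernWeight m i ((l + 1 - s : ℝ) / (m + 2 : ℕ)) :=
    bernWeight_nonneg _ _ (div_nonneg (by linarith) hN.le)
      ((div_le_one hN).2 (by rw [hNe]; linarith))
  have hmi : ((m - i : ℕ) : ℝ) = m - i := by rw [Nat.cast_sub hi]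
  rcases le_total l i with h | h
  · have hli : (l : ℝ) ≤ i := by exact_mod_cast h
    refine le_trans ?_ (le_add_of_nonneg_right w2)
    rw [bernWeight_div_eq (by omega) hi, bernWeight_div_eq (by omega) hi, mul_left_comm]
    refine mul_le_mul_of_nonneg_left ?_ (by positivity)
    rw [mul_left_comm]
    have hy : (0 : ℝ) < (m + 2 : ℕ) - (l + 1) := by rw [hNe]; linarith
    have e := one_sub_mul_pow_le (r := m - i) hy (by rw [hmi, hNe]; linarith) h0.le
      (by rw [hNe]; linarith)
    rw [sub_sub] at e
    refine mul_le_mul ?_ e (mul_nonneg (by linarith) (by positivity)) (by positivity)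
    exact pow_le_pow_left₀ (by positivity) (by linarith) _
  · have hli : (i : ℝ) ≤ l := by exact_mod_cast h
    refine le_trans ?_ (le_add_of_nonneg_left w1)
    rw [bernWeight_div_eq (by omega) hi, bernWeight_div_eq (by omega) hi, mul_left_comm]
    refine mul_le_mul_of_nonneg_left ?_ (by positivity)
    rw [← mul_assoc]
    have e := one_sub_mul_pow_le (y := (l + 1 : ℝ)) (r := i) (by positivity) (by linarith) h0.le
      (by linarith)
    refine mul_le_mul e ?_ (pow_nonneg (by rw [hNe]; linarith) _) (pow_nonneg (by linarith) _)
    gcongr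
    · rw [hNe]; linarith
    · linarith

lemma secondDiff_bernGrid_hinge_ge {m i l : ℕ} (hi : i ≤ m) (hl : l ≤ m) :
    (m + 2) * ((m + 1) * bernWeight m i ((l + 1 : ℝ) / (m + 2 : ℕ))) / ((m + 2 : ℕ) : ℝ) ^ 2 / 3 ≤
      secondDiff (bernGrid (m + 2) (hinge i)) l := by
  rw [secondDiff_bernGrid_eq]
  set F := (m + 2) * ((m + 1) * bernWeight m i ((l + 1 : ℝ) / (m + 2 : ℕ))) /
    ((m + 2 : ℕ) : ℝ) ^ 2 with hF
  have := second_difference_ge (hasDerivAt_bernSum_div m (hinge i))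
    (hasDerivAt_bernSum_div_deriv m (hinge i)) (l + 1) F F ?_
  · linarith
  · intro s hs
    rw [bernSum₂_hinge hi, bernSum₂_hinge hi]
    have e := one_sub_mul_bernWeight_le hi hl hs
    have c : (0 : ℝ) ≤ (m + 2) * (m + 1) / ((m + 2 : ℕ) : ℝ) ^ 2 := by positivity
    have := mul_le_mul_of_nonneg_left e c
    rw [hF]
    calc _ = (m + 2) * (m + 1) / ((m + 2 : ℕ) : ℝ) ^ 2 *
        ((1 - s) * bernWeight m i ((l + 1 : ℝ) / (m + 2 : ℕ))) := by ring
      _ ≤ _ := this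
      _ = _ := by ring

lemma grid_succ_mem {m l : ℕ} (hl : l ≤ m) :
    0 ≤ (l + 1 : ℝ) / (m + 2 : ℕ) ∧ (l + 1 : ℝ) / (m + 2 : ℕ) ≤ 1 := by
  refine ⟨by positivity, (div_le_one (by positivity)).2 ?_⟩
  exact_mod_cast (by omega : l + 1 ≤ m + 2)

lemma secondDiff_bernGrid_hinge_nonneg {m i l : ℕ} (hi : i ≤ m) (hl : l ≤ m) :
    0 ≤ secondDiff (bernGrid (m + 2) (hinge i)) l := by
  refine le_trans ?_ (secondDiff_bernGrid_hinge_ge hi hl)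
  have := bernWeight_nonneg m i (grid_succ_mem hl).1 (grid_succ_mem hl).2
  positivity

/-- The error of the Bernstein operator on a hinge is controlled by its second difference. -/
lemma bernGrid_hinge_sub_le_secondDiff {m i l : ℕ} (hi : i ≤ m) (hl : l ≤ m) :
    bernGrid (m + 2) (hinge i) (l + 1) - hinge i (l + 1) ≤
      3 * ((l + 1) * (m + 1 - l) / (m + 2)) * secondDiff (bernGrid (m + 2) (hinge i)) l := by
  have e1 := bernGrid_hinge_sub_le hi (show l + 1 ≤ m + 2 by omega)
  have e2 := secondDiff_bernGrid_hinge_ge hi hl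
  rw [Nat.cast_add, Nat.cast_one] at e1
  have e3 := bernWeight_identity m i hi ((l + 1 : ℝ) / (m + 2 : ℕ))
  set w := bernWeight m i ((l + 1 : ℝ) / (m + 2 : ℕ))
  set v := bernWeight (m + 2) (i + 1) ((l + 1 : ℝ) / (m + 2 : ℕ))
  have hlm : (l : ℝ) ≤ m := by exact_mod_cast hl
  have c : 0 ≤ 3 * ((l + 1) * (m + 1 - l) / (m + 2 : ℝ)) :=
    mul_nonneg (by norm_num) (div_nonneg (mul_nonneg (by positivity) (by linarith)) (by positivity))
  refine e1.trans (le_trans (le_of_eq ?_) (mul_le_mul_of_nonneg_left e2 c))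
  have e4 : ((i : ℝ) + 1) * (m + 1 - i) / (m + 2) * v = (i + 1) * (m + 1 - i) * v / (m + 2) := by
    ring
  rw [e4, ← e3]
  push_cast
  field_simp
  ring

lemma secondDiff_add (a b : ℕ → ℝ) (i : ℕ) :
    secondDiff (fun k => a k + b k) i = secondDiff a i + secondDiff b i := by
  unfold secondDiff; ring

lemma secondDiff_sub (a b : ℕ → ℝ) (i : ℕ) :
    secondDiff (fun k => a k - b k) i = secondDiff a i - secondDiff b i := by
  unfold secondDiff; ring

lemma secondDiff_neg (a : ℕ → ℝ) (i : ℕ) : secondDiff (fun k => -a k) i = -secondDiff a i := by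
  unfold secondDiff; ring

/-- The sequence `(k + 1) (1 + 1 / 2 + ⋯ + 1 / k)`, a discrete analogue of `x log x`. -/
noncomputable def harmonicEntropy (k : ℕ) : ℝ :=
  (k + 1) * ∑ i ∈ Finset.range k, 1 / ((i : ℝ) + 1)

lemma secondDiff_harmonicEntropy (i : ℕ) : secondDiff harmonicEntropy i = 1 / ((i : ℝ) + 2) := by
  unfold secondDiff harmonicEntropy
  rw [Finset.sum_range_succ, Finset.sum_range_succ]
  have h1 : (i : ℝ) + 1 ≠ 0 := by positivity
  have h2 : (i : ℝ) + 2 ≠ 0 := by positivity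
  have h3 : ((i + 1 : ℕ) : ℝ) + 1 ≠ 0 := by positivity
  push_cast at h3 ⊢
  rw [show (i : ℝ) + 1 + 1 = i + 2 by ring]
  field_simp
  ring

lemma sq_mul_bernSum₂_harmonicEntropy (m : ℕ) (x : ℝ) :
    x ^ 2 * bernSum₂ m harmonicEntropy x = (m + 2 : ℕ) * x - 1 + (1 - x) ^ (m + 2) := by
  have h0 : bernSum (m + 2) (fun k => (k : ℝ) - 1) x = (m + 2 : ℕ) * x - 1 := by
    rw [bernSum_sub, bernSum_id, bernSum_const]
  have h1 : bernSum (m + 2) (fun k => (k : ℝ) - 1) x =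
      ∑ i ∈ Finset.range (m + 1), bernWeight (m + 2) (i + 2) x * (i + 1) - (1 - x) ^ (m + 2) := by
    unfold bernSum
    rw [Finset.sum_range_succ', Finset.sum_range_succ']
    have e : bernWeight (m + 2) 0 x = (1 - x) ^ (m + 2) := by simp [bernWeight]
    rw [e]
    push_cast
    have e2 : ∀ i : ℕ, (i : ℝ) + 1 + 1 - 1 = i + 1 := fun i => by ring
    simp only [e2]
    ring
  rw [← h0, h1, sub_add_cancel]
  unfold bernSum₂ bernSum
  simp only [Finset.mul_sum]
  refine Finset.sum_congr rfl fun i hi => ?_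
  obtain ⟨r, rfl⟩ : ∃ r, m = i + r := ⟨m - i, by have := Finset.mem_range.1 hi; omega⟩
  rw [secondDiff_harmonicEntropy]
  have e1 := Nat.add_one_mul_choose_eq (i + r + 1) (i + 1)
  have e2 := Nat.add_one_mul_choose_eq (i + r) i
  have e1' : ((i : ℝ) + r + 2) * ((i + r + 1).choose (i + 1)) =
      (i + r + 2).choose (i + 2) * (i + 2) := by exact_mod_cast e1
  have e2' : ((i : ℝ) + r + 1) * ((i + r).choose i) = (i + r + 1).choose (i + 1) * (i + 1) := by
    exact_mod_cast e2
  unfold bernWeight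
  rw [show i + r + 2 - (i + 2) = r by omega, show i + r - i = r by omega]
  have h2 : (i : ℝ) + 2 ≠ 0 := by positivity
  push_cast
  field_simp
  linear_combination x ^ (i + 2) * (1 - x) ^ r * ((i + r + 2) * e2' + (i + 1) * e1')

lemma bernSum₂_harmonicEntropy_le {m : ℕ} {s : ℝ} (h0 : 0 < s) (h1 : s ≤ (m + 2 : ℕ)) :
    bernSum₂ m harmonicEntropy (s / (m + 2 : ℕ)) / ((m + 2 : ℕ) : ℝ) ^ 2 ≤
      (s + 1) / (1 + (s + 1) ^ 2) := by
  have hN : ((m + 2 : ℕ) : ℝ) ≠ 0 := by positivity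
  have e := sq_mul_bernSum₂_harmonicEntropy m (s / (m + 2 : ℕ))
  have e1 := Real.one_sub_div_pow_le_exp_neg h1
  have e2 := Real.quadratic_le_exp_of_nonneg h0.le
  have e3 : Real.exp (-s) ≤ 1 / (1 + s + s ^ 2 / 2) := by
    rw [Real.exp_neg, ← one_div]
    exact one_div_le_one_div_of_le (by positivity) e2
  rw [mul_div_cancel₀ _ hN] at e
  have e4 : s ^ 2 * (bernSum₂ m harmonicEntropy (s / (m + 2 : ℕ)) / ((m + 2 : ℕ) : ℝ) ^ 2) =
      s - 1 + (1 - s / (m + 2 : ℕ)) ^ (m + 2) := by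
    rw [← e]; ring
  have e5 : s ^ 2 * ((s + 1) / (1 + (s + 1) ^ 2)) = s - 1 + 1 / (1 + s + s ^ 2 / 2) := by
    have : 1 + s + s ^ 2 / 2 ≠ 0 := by positivity
    have : 1 + (s + 1) ^ 2 ≠ 0 := by positivity
    field_simp
    ring
  refine le_of_mul_le_mul_left ?_ (show 0 < s ^ 2 by positivity)
  rw [e4, e5]
  linarith

lemma div_one_add_sq_add_le {z σ : ℝ} (hz : 0 < z) (h0 : 0 < σ) (h1 : σ < 1) :
    (z + σ) / (1 + (z + σ) ^ 2) + (z - σ) / (1 + (z - σ) ^ 2) ≤ 2 * (1 / z) := by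
  rw [div_add_div _ _ (by positivity) (by positivity), mul_one_div, div_le_div_iff₀ (by positivity) hz]
  have : 0 ≤ z ^ 2 * (1 - σ ^ 2) := mul_nonneg (by positivity) (by nlinarith)
  nlinarith [sq_nonneg (σ ^ 2), sq_nonneg σ]

lemma secondDiff_bernGrid_harmonicEntropy_le {m l : ℕ} (hl : l ≤ m) :
    secondDiff (bernGrid (m + 2) harmonicEntropy) l ≤ 1 / ((l : ℝ) + 2) := by
  rw [secondDiff_bernGrid_eq]
  refine second_difference_le (hasDerivAt_bernSum_div m harmonicEntropy)
    (hasDerivAt_bernSum_div_deriv m harmonicEntropy) (l + 1) _ ?_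
  rintro s ⟨h0, h1⟩
  have hl0 : (0 : ℝ) ≤ l := l.cast_nonneg
  have hlm : (l : ℝ) ≤ m := by exact_mod_cast hl
  have hNe : ((m + 2 : ℕ) : ℝ) = m + 2 := by push_cast; ring
  have e1 := bernSum₂_harmonicEntropy_le (m := m) (s := l + 1 + s) (by linarith)
    (by rw [hNe]; linarith)
  have e2 := bernSum₂_harmonicEntropy_le (m := m) (s := l + 1 - s) (by linarith)
    (by rw [hNe]; linarith)
  refine (add_le_add e1 e2).trans ?_
  rw [show (l : ℝ) + 1 + s + 1 = (l + 2) + s by ring, show (l : ℝ) + 1 - s + 1 = (l + 2) - s by ring]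
  exact div_one_add_sq_add_le (by positivity) h0 h1

lemma bernGrid_reflect {n : ℕ} (hn : 0 < n) (a : ℕ → ℝ) {k : ℕ} (hk : k ≤ n) :
    bernGrid n (fun k => a (n - k)) k = bernGrid n a (n - k) := by
  unfold bernGrid
  rw [bernSum_reflect, Nat.cast_sub hk, sub_div, div_self (by positivity)]

lemma secondDiff_reflect (a : ℕ → ℝ) {m i : ℕ} (hi : i ≤ m) :
    secondDiff (fun k => a (m + 2 - k)) i = secondDiff a (m - i) := by
  simp only [secondDiff]
  rw [show m + 2 - (i + 2) = m - i by omega, show m + 2 - (i + 1) = m - i + 1 by omega,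
    show m + 2 - i = m - i + 2 by omega]
  ring

lemma secondDiff_congr {a b : ℕ → ℝ} {m i : ℕ} (hi : i ≤ m) (h : ∀ k ≤ m + 2, a k = b k) :
    secondDiff a i = secondDiff b i := by
  unfold secondDiff
  rw [h i (by omega), h (i + 1) (by omega), h (i + 2) (by omega)]

/-- The size of the second differences of `gridEntropy`, comparable to `n / (k (n - k))`. -/
noncomputable def gridCurv (m i : ℕ) : ℝ := 1 / ((i : ℝ) + 2) + 1 / ((m : ℝ) + 2 - i)

/-- The symmetric discrete entropy on the grid `0, …, m + 2`. -/
noncomputable def gridEntropy (m k : ℕ) : ℝ := harmonicEntropy k + harmonicEntropy (m + 2 - k)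

lemma secondDiff_gridEntropy {m i : ℕ} (hi : i ≤ m) :
    secondDiff (gridEntropy m) i = gridCurv m i := by
  unfold gridEntropy gridCurv
  rw [secondDiff_add, secondDiff_reflect _ hi, secondDiff_harmonicEntropy,
    secondDiff_harmonicEntropy, Nat.cast_sub hi]
  ring

lemma secondDiff_bernGrid_gridEntropy_le {m l : ℕ} (hl : l ≤ m) :
    secondDiff (bernGrid (m + 2) (gridEntropy m)) l ≤ gridCurv m l := by
  have e : bernGrid (m + 2) (gridEntropy m) = fun k => bernGrid (m + 2) harmonicEntropy k +
      bernGrid (m + 2) (fun k => harmonicEntropy (m + 2 - k)) k := by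
    funext k
    exact bernSum_add _ _ _ _
  rw [e, secondDiff_add, secondDiff_congr hl
    (a := bernGrid (m + 2) (fun k => harmonicEntropy (m + 2 - k)))
    (b := fun k => bernGrid (m + 2) harmonicEntropy (m + 2 - k))
    (fun k hk => bernGrid_reflect (by omega) _ hk), secondDiff_reflect _ hl]
  have e1 := secondDiff_bernGrid_harmonicEntropy_le hl
  have e2 := secondDiff_bernGrid_harmonicEntropy_le (Nat.sub_le m l)
  rw [Nat.cast_sub hl] at e2
  unfold gridCurv
  rw [show (m : ℝ) + 2 - l = m - l + 2 by ring]
  linarith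

lemma gridCurv_pos {m i : ℕ} (hi : i ≤ m) : 0 < gridCurv m i := by
  have : (i : ℝ) ≤ m := by exact_mod_cast hi
  unfold gridCurv
  have : (0 : ℝ) < m + 2 - i := by linarith
  positivity

/-- The error of the Bernstein operator on a hinge at the grid point `j`. -/
noncomputable def hingeError (m j i : ℕ) : ℝ := bernGrid (m + 2) (hinge i) j - hinge i j

lemma sum_hingeError (m : ℕ) {j : ℕ} (hj : j ≤ m + 2) :
    ∑ i ∈ Finset.range (m + 1), hingeError m j i =
      j * (1 - (j : ℝ) / (m + 2 : ℕ)) / 2 := by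
  have e := bernGrid_sub_eq_sum (fun k : ℕ => (k : ℝ) ^ 2) hj
  have e1 : ∀ i, secondDiff (fun k : ℕ => (k : ℝ) ^ 2) i = 2 := fun i => by
    unfold secondDiff; push_cast; ring
  have hN : ((m + 2 : ℕ) : ℝ) ≠ 0 := by positivity
  simp only [e1, ← Finset.mul_sum] at e
  unfold bernGrid at e
  rw [bernSum_sq, mul_div_cancel₀ _ hN] at e
  unfold hingeError bernGrid
  linarith

lemma sum_mul_hingeError (m : ℕ) {j : ℕ} (hj : j ≤ m + 2) :
    ∑ i ∈ Finset.range (m + 1), ((i : ℝ) + 1) * hingeError m j i =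
      j * (1 - (j : ℝ) / (m + 2 : ℕ)) / 2 * (j + (1 - 2 * ((j : ℝ) / (m + 2 : ℕ))) / 3) := by
  have e := bernGrid_sub_eq_sum (fun k : ℕ => (k : ℝ) ^ 3) hj
  have e1 : ∀ i : ℕ, secondDiff (fun k : ℕ => (k : ℝ) ^ 3) i = 6 * (i + 1) := fun i => by
    unfold secondDiff; push_cast; ring
  have hN : ((m + 2 : ℕ) : ℝ) ≠ 0 := by positivity
  simp only [e1, mul_assoc, ← Finset.mul_sum] at e
  unfold bernGrid at e
  rw [bernSum_cube, mul_div_cancel₀ _ hN] at e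
  unfold hingeError bernGrid
  linarith

lemma five_div_le_of_one_le {y : ℝ} (hy : 1 ≤ y) :
    5 / 24 ≤ y / 2 * (2 / (y + 1) - (y + 1 + 1 / 3) / (y + 1) ^ 2) := by
  have h : 0 < y + 1 := by linarith
  have e : y / 2 * (2 / (y + 1) - (y + 1 + 1 / 3) / (y + 1) ^ 2) =
      (y * (3 * y + 2)) / (6 * (y + 1) ^ 2) := by
    field_simp; ring
  rw [e, div_le_div_iff₀ (by norm_num) (by positivity)]
  nlinarith [mul_nonneg (sub_nonneg.2 hy) (show 0 ≤ 7 * y + 5 by linarith)]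

lemma le_one_div_of_pos {t c : ℝ} (ht : 0 < t) (hc : 0 < c) : 2 / c - t / c ^ 2 ≤ 1 / t := by
  have e : 1 / t - (2 / c - t / c ^ 2) = (t - c) ^ 2 / (t * c ^ 2) := by field_simp; ring
  have : 0 ≤ (t - c) ^ 2 / (t * c ^ 2) := by positivity
  linarith

/-- The Bernstein operator increases the grid entropy by a definite amount. -/
lemma bernGrid_gridEntropy_sub_ge {m l : ℕ} (hl : l ≤ m) :
    5 / 24 ≤ bernGrid (m + 2) (gridEntropy m) (l + 1) - gridEntropy m (l + 1) := by
  have hj : l + 1 ≤ m + 2 := by omega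
  rw [bernGrid_sub_eq_sum _ hj]
  have s0 := sum_hingeError m hj
  have s1 := sum_mul_hingeError m hj
  obtain ⟨p0, p1⟩ := grid_succ_mem hl
  have hlm : (l : ℝ) ≤ m := by exact_mod_cast hl
  have hl0 : (0 : ℝ) ≤ l := l.cast_nonneg
  rw [Nat.cast_add, Nat.cast_one] at s0 s1
  set p : ℝ := (l + 1 : ℝ) / (m + 2 : ℕ) with hp
  have hNp : ((m : ℝ) + 2) * p = l + 1 := by rw [hp]; push_cast; field_simp
  have hG : ∀ i, 0 ≤ hingeError m (l + 1) i := fun i => bernGrid_hinge_sub_nonneg i hj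
  have q1 : 5 / 24 * (1 - p) ≤
      ∑ i ∈ Finset.range (m + 1), 1 / ((i : ℝ) + 2) * hingeError m (l + 1) i := by
    have h1 : ∑ i ∈ Finset.range (m + 1),
        (2 / ((l : ℝ) + 1 + 1) - ((i : ℝ) + 2) / ((l : ℝ) + 1 + 1) ^ 2) * hingeError m (l + 1) i ≤
        ∑ i ∈ Finset.range (m + 1), 1 / ((i : ℝ) + 2) * hingeError m (l + 1) i :=
      Finset.sum_le_sum fun i _ => mul_le_mul_of_nonneg_right
        (le_one_div_of_pos (by positivity) (by positivity)) (hG i)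
    refine le_trans ?_ h1
    have e : ∀ i : ℕ, (2 / ((l : ℝ) + 1 + 1) - ((i : ℝ) + 2) / ((l : ℝ) + 1 + 1) ^ 2) *
        hingeError m (l + 1) i =
        (2 / ((l : ℝ) + 1 + 1) - 1 / ((l : ℝ) + 1 + 1) ^ 2) * hingeError m (l + 1) i -
        1 / ((l : ℝ) + 1 + 1) ^ 2 * (((i : ℝ) + 1) * hingeError m (l + 1) i) := fun i => by ring
    simp only [e, Finset.sum_sub_distrib, ← Finset.mul_sum]
    rw [s0, s1]
    have k := mul_le_mul_of_nonneg_right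
      (five_div_le_of_one_le (show 1 ≤ (l : ℝ) + 1 by linarith)) (sub_nonneg.2 p1)
    refine k.trans ?_
    have : 0 ≤ ((l : ℝ) + 1) * (1 - p) * (p / 3) / ((l : ℝ) + 1 + 1) ^ 2 :=
      div_nonneg (mul_nonneg (mul_nonneg (by linarith) (by linarith)) (by linarith)) (by positivity)
    rw [← sub_nonneg]
    refine this.trans (le_of_eq ?_)
    ring
  have q2 : 5 / 24 * p ≤
      ∑ i ∈ Finset.range (m + 1), 1 / ((m : ℝ) + 2 - i) * hingeError m (l + 1) i := by
    have hc : 0 < (m : ℝ) + 1 - l + 1 := by linarith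
    have h1 : ∑ i ∈ Finset.range (m + 1),
        (2 / ((m : ℝ) + 1 - l + 1) - ((m : ℝ) + 2 - i) / ((m : ℝ) + 1 - l + 1) ^ 2) *
          hingeError m (l + 1) i ≤
        ∑ i ∈ Finset.range (m + 1), 1 / ((m : ℝ) + 2 - i) * hingeError m (l + 1) i := by
      refine Finset.sum_le_sum fun i hi => mul_le_mul_of_nonneg_right
        (le_one_div_of_pos ?_ hc) (hG i)
      have : (i : ℝ) ≤ m := by
        have := Finset.mem_range.1 hi
        exact_mod_cast (by omega : i ≤ m)
      linarith
    refine le_trans ?_ h1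
    have e : ∀ i : ℕ, (2 / ((m : ℝ) + 1 - l + 1) - ((m : ℝ) + 2 - i) / ((m : ℝ) + 1 - l + 1) ^ 2) *
        hingeError m (l + 1) i =
        (2 / ((m : ℝ) + 1 - l + 1) - ((m : ℝ) + 3) / ((m : ℝ) + 1 - l + 1) ^ 2) *
          hingeError m (l + 1) i +
        1 / ((m : ℝ) + 1 - l + 1) ^ 2 * (((i : ℝ) + 1) * hingeError m (l + 1) i) := fun i => by ring
    simp only [e, Finset.sum_add_distrib, ← Finset.mul_sum]
    rw [s0, s1]
    have k := mul_le_mul_of_nonneg_right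
      (five_div_le_of_one_le (show 1 ≤ (m : ℝ) + 1 - l by linarith)) p0
    refine k.trans ?_
    have hV : ((l : ℝ) + 1) * (1 - p) = ((m : ℝ) + 1 - l) * p := by linear_combination -hNp
    rw [hV]
    have : 0 ≤ ((m : ℝ) + 1 - l) * p * ((1 - p) / 3) / ((m : ℝ) + 1 - l + 1) ^ 2 :=
      div_nonneg (mul_nonneg (mul_nonneg (by linarith) (by linarith)) (by linarith)) (by positivity)
    rw [← sub_nonneg]
    refine this.trans (le_of_eq ?_)
    ring
  have e : ∑ i ∈ Finset.range (m + 1), secondDiff (gridEntropy m) i *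
      (bernGrid (m + 2) (hinge i) (l + 1) - hinge i (l + 1)) =
      ∑ i ∈ Finset.range (m + 1), 1 / ((i : ℝ) + 2) * hingeError m (l + 1) i +
      ∑ i ∈ Finset.range (m + 1), 1 / ((m : ℝ) + 2 - i) * hingeError m (l + 1) i := by
    rw [← Finset.sum_add_distrib]
    refine Finset.sum_congr rfl fun i hi => ?_
    rw [secondDiff_gridEntropy (by have := Finset.mem_range.1 hi; omega)]
    unfold gridCurv hingeError
    ring
  rw [e]
  linarith

lemma mul_gridCurv_le_one {m l : ℕ} (hl : l ≤ m) :
    (l + 1) * (m + 1 - l) / (m + 2) * gridCurv m l ≤ 1 := by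
  have hlm : (l : ℝ) ≤ m := by exact_mod_cast hl
  have hl0 : (0 : ℝ) ≤ l := l.cast_nonneg
  have h : (0 : ℝ) < m + 2 - l := by linarith
  unfold gridCurv
  rw [div_add_div _ _ (by positivity) h.ne', div_mul_div_comm, div_le_one (by positivity)]
  nlinarith [sq_nonneg ((m : ℝ) - 2 * l), mul_nonneg hl0 (sub_nonneg.2 hlm)]

lemma bernGrid_sub_ge_of_secondDiff_ge {m : ℕ} {a : ℕ → ℝ} {S : ℝ}
    (h : ∀ i ≤ m, |secondDiff a i| ≤ S * gridCurv m i) (hS : 0 ≤ S) {l : ℕ} (hl : l ≤ m)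
    (hlow : 19 / 20 * (S * gridCurv m l) ≤ secondDiff (bernGrid (m + 2) a) l) :
    7 / 120 * S ≤ bernGrid (m + 2) a (l + 1) - a (l + 1) := by
  have hj : l + 1 ≤ m + 2 := by omega
  have hlm : (l : ℝ) ≤ m := by exact_mod_cast hl
  set κ : ℝ := (l + 1) * (m + 1 - l) / (m + 2) with hκ
  have hκ0 : 0 ≤ κ := div_nonneg (mul_nonneg (by positivity) (by linarith)) (by positivity)
  have e1 : ∑ i ∈ Finset.range (m + 1), (S * gridCurv m i - secondDiff a i) *
      (bernGrid (m + 2) (hinge i) (l + 1) - hinge i (l + 1)) ≤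
      ∑ i ∈ Finset.range (m + 1), (S * gridCurv m i - secondDiff a i) *
      (3 * κ * secondDiff (bernGrid (m + 2) (hinge i)) l) := by
    refine Finset.sum_le_sum fun i hi => ?_
    have hi' : i ≤ m := by have := Finset.mem_range.1 hi; omega
    exact mul_le_mul_of_nonneg_left (bernGrid_hinge_sub_le_secondDiff hi' hl)
      (sub_nonneg.2 (abs_le.1 (h i hi')).2)
  have e2 : ∑ i ∈ Finset.range (m + 1), (S * gridCurv m i - secondDiff a i) *
      (bernGrid (m + 2) (hinge i) (l + 1) - hinge i (l + 1)) =
      S * (bernGrid (m + 2) (gridEntropy m) (l + 1) - gridEntropy m (l + 1)) -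
      (bernGrid (m + 2) a (l + 1) - a (l + 1)) := by
    rw [bernGrid_sub_eq_sum _ hj, bernGrid_sub_eq_sum _ hj, Finset.mul_sum,
      ← Finset.sum_sub_distrib]
    refine Finset.sum_congr rfl fun i hi => ?_
    rw [secondDiff_gridEntropy (by have := Finset.mem_range.1 hi; omega)]
    ring
  have e3 : ∑ i ∈ Finset.range (m + 1), (S * gridCurv m i - secondDiff a i) *
      (3 * κ * secondDiff (bernGrid (m + 2) (hinge i)) l) =
      3 * κ * (S * secondDiff (bernGrid (m + 2) (gridEntropy m)) l -
      secondDiff (bernGrid (m + 2) a) l) := by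
    rw [secondDiff_bernGrid_eq_sum a, secondDiff_bernGrid_eq_sum (gridEntropy m), Finset.mul_sum,
      ← Finset.sum_sub_distrib, Finset.mul_sum]
    refine Finset.sum_congr rfl fun i hi => ?_
    rw [secondDiff_gridEntropy (by have := Finset.mem_range.1 hi; omega)]
    ring
  rw [e2, e3] at e1
  have e4 := mul_le_mul_of_nonneg_left (secondDiff_bernGrid_gridEntropy_le hl) hS
  have e5 : 3 * κ * (S * secondDiff (bernGrid (m + 2) (gridEntropy m)) l -
      secondDiff (bernGrid (m + 2) a) l) ≤ 3 * κ * (1 / 20 * (S * gridCurv m l)) :=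
    mul_le_mul_of_nonneg_left (by linarith) (by positivity)
  have e6 := mul_le_mul_of_nonneg_left (mul_gridCurv_le_one hl) (show 0 ≤ 3 / 20 * S by positivity)
  have e7 := mul_le_mul_of_nonneg_left (bernGrid_gridEntropy_sub_ge hl) hS
  rw [← hκ] at e6
  linarith

lemma le_of_abs_secondDiff_ge {m : ℕ} {a : ℕ → ℝ} {S δ : ℝ}
    (h : ∀ i ≤ m, |secondDiff a i| ≤ S * gridCurv m i) (hS : 0 ≤ S) {l : ℕ} (hl : l ≤ m)
    (hlow : 19 / 20 * (S * gridCurv m l) ≤ |secondDiff (bernGrid (m + 2) a) l|)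
    (hδ : |bernGrid (m + 2) a (l + 1) - a (l + 1)| ≤ δ) : 7 / 120 * S ≤ δ := by
  rcases le_abs.1 hlow with h1 | h1
  · exact (bernGrid_sub_ge_of_secondDiff_ge h hS hl h1).trans ((le_abs_self _).trans hδ)
  · have e : bernGrid (m + 2) (fun k => -a k) = fun k => -bernGrid (m + 2) a k := by
      funext k; exact bernSum_neg _ _ _
    have := bernGrid_sub_ge_of_secondDiff_ge (a := fun k => -a k) (S := S) (m := m)
      (fun i hi => by rw [secondDiff_neg, abs_neg]; exact h i hi) hS hl
      (by rw [e, secondDiff_neg]; exact h1)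
    simp only [e] at this
    have := neg_abs_le (bernGrid (m + 2) a (l + 1) - a (l + 1))
    linarith

lemma succ_mul_bernSum_shift (n : ℕ) (a : ℕ → ℝ) (x : ℝ) :
    (n + 1) * (x * bernSum n (fun k => a (k + 1)) x) = bernSum (n + 1) (fun k => k * a k) x := by
  unfold bernSum
  rw [Finset.sum_range_succ' _ (n + 1)]
  simp only [Finset.mul_sum, Nat.cast_zero, zero_mul, mul_zero, add_zero]
  refine Finset.sum_congr rfl fun k _ => ?_
  have e : ((n : ℝ) + 1) * n.choose k = (n + 1).choose (k + 1) * (k + 1) := by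
    exact_mod_cast Nat.add_one_mul_choose_eq n k
  unfold bernWeight
  rw [Nat.add_sub_add_right]
  push_cast
  linear_combination x ^ (k + 1) * (1 - x) ^ (n - k) * a (k + 1) * e

lemma mul_bernSum_diff (n : ℕ) (a : ℕ → ℝ) (x : ℝ) :
    x * (1 - x) * ((n + 1) * bernSum n (fun k => a (k + 1) - a k) x) =
      bernSum (n + 1) (fun k => k * a k) x - (n + 1) * x * bernSum (n + 1) a x := by
  rw [bernSum_sub, bernSum_succ n a, ← succ_mul_bernSum_shift]
  ring

lemma sq_mul_bernSum₂ (m : ℕ) (a : ℕ → ℝ) (x : ℝ) :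
    (x * (1 - x)) ^ 2 * bernSum₂ m a x = bernSum (m + 2) (fun k =>
      ((k - (m + 2 : ℕ) * x) ^ 2 - ((m + 2 : ℕ) - k) * x ^ 2 - k * (1 - x) ^ 2) * a k) x := by
  have e1 := mul_bernSum_diff m (fun k => a (k + 1) - a k) x
  have e2 : bernSum₂ m a x =
      (m + 2) * ((m + 1) * bernSum m (fun k => a (k + 1 + 1) - a (k + 1) - (a (k + 1) - a k)) x) := by
    unfold bernSum₂
    have : secondDiff a = fun k => a (k + 1 + 1) - a (k + 1) - (a (k + 1) - a k) := by
      funext k; unfold secondDiff; ring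
    rw [this]
  have e3 := mul_bernSum_diff (m + 1) (fun k => ((k : ℝ) - (m + 1) * x) * a k) x
  have e4 := succ_mul_bernSum_shift (m + 1) a x
  have e5 : (fun k : ℕ => (((k + 1 : ℕ) : ℝ) - (m + 1) * x) * a (k + 1) -
      ((k : ℝ) - (m + 1) * x) * a k) = fun k : ℕ => ((k : ℝ) * (a (k + 1) - a k) -
      (m + 1) * x * (a (k + 1) - a k)) + a (k + 1) := by
    funext k; push_cast; ring
  rw [e5, bernSum_add, bernSum_sub _ (fun k => (k : ℝ) * (a (k + 1) - a k)), bernSum_mul] at e3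
  have e6 : (fun k : ℕ => (((k : ℝ) - (m + 2 : ℕ) * x) ^ 2 - ((m + 2 : ℕ) - k) * x ^ 2 -
      k * (1 - x) ^ 2) * a k) = fun k : ℕ => ((k : ℝ) * (((k : ℝ) - (m + 1) * x) * a k) -
      (m + 2) * x * (((k : ℝ) - (m + 1) * x) * a k)) - (1 - x) * (k * a k) := by
    funext k; push_cast; ring
  rw [e6, bernSum_sub, bernSum_sub, bernSum_mul, bernSum_mul, e2]
  push_cast at e1 e3 e4
  linear_combination x * (1 - x) * (m + 2) * e1 + e3 - (1 - x) * e4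

/-- A Bernstein-type inequality for the second derivative. -/
lemma abs_mul_bernSum₂_le {m : ℕ} {a : ℕ → ℝ} {M : ℝ} (h : ∀ k ≤ m + 2, |a k| ≤ M) {x : ℝ}
    (hx : x ∈ Set.Ioo (0 : ℝ) 1) : |x * (1 - x) * bernSum₂ m a x| ≤ 2 * (m + 2) * M := by
  obtain ⟨h0, h1⟩ := hx
  have hv : 0 < x * (1 - x) := mul_pos h0 (by linarith)
  refine le_of_mul_le_mul_left ?_ hv
  have e1 : x * (1 - x) * |x * (1 - x) * bernSum₂ m a x| =
      |(x * (1 - x)) ^ 2 * bernSum₂ m a x| := by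
    rw [← abs_of_pos hv, ← abs_mul, abs_of_pos hv]; ring_nf
  have e2 : bernSum (m + 2) (fun k => M * (((k : ℝ) ^ 2 + ((1 - x) ^ 2 - x ^ 2 -
      2 * (m + 2 : ℕ) * x) * k) + ((m + 2 : ℕ) * x ^ 2 + ((m + 2 : ℕ) * x) ^ 2))) x =
      x * (1 - x) * (2 * (m + 2) * M) := by
    rw [bernSum_mul, bernSum_add, bernSum_add, bernSum_mul, bernSum_const, bernSum_sq, bernSum_id]
    push_cast
    ring
  have bd : ∀ k ≤ m + 2, |((k - (m + 2 : ℕ) * x) ^ 2 - ((m + 2 : ℕ) - k) * x ^ 2 -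
      k * (1 - x) ^ 2) * a k| ≤ M * (((k : ℝ) ^ 2 + ((1 - x) ^ 2 - x ^ 2 -
      2 * (m + 2 : ℕ) * x) * k) + ((m + 2 : ℕ) * x ^ 2 + ((m + 2 : ℕ) * x) ^ 2)) := by
    intro k hk
    rw [abs_mul, mul_comm]
    have hk' : (k : ℝ) ≤ (m + 2 : ℕ) := by exact_mod_cast hk
    have u1 : 0 ≤ (((m + 2 : ℕ) : ℝ) - k) * x ^ 2 := mul_nonneg (by linarith) (by positivity)
    have u2 : 0 ≤ (k : ℝ) * (1 - x) ^ 2 := by positivity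
    have u3 : 0 ≤ (k - ((m + 2 : ℕ) : ℝ) * x) ^ 2 := sq_nonneg _
    refine mul_le_mul (h k hk) ?_ (abs_nonneg _) ((abs_nonneg _).trans (h k hk))
    have e : (k : ℝ) ^ 2 + ((1 - x) ^ 2 - x ^ 2 - 2 * (m + 2 : ℕ) * x) * k +
        ((m + 2 : ℕ) * x ^ 2 + ((m + 2 : ℕ) * x) ^ 2) = (k - ((m + 2 : ℕ) : ℝ) * x) ^ 2 +
        (((m + 2 : ℕ) : ℝ) - k) * x ^ 2 + k * (1 - x) ^ 2 := by ring
    rw [e, abs_le]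
    constructor <;> linarith
  rw [e1, sq_mul_bernSum₂, ← e2, abs_le, ← bernSum_neg]
  exact ⟨bernSum_mono _ (fun k hk => (abs_le.1 (bd k hk)).1) h0.le h1.le,
    bernSum_mono _ (fun k hk => (abs_le.1 (bd k hk)).2) h0.le h1.le⟩

lemma inv_le_gridCurv {m l : ℕ} (hl : l ≤ m) :
    (m + 2 : ℝ) / ((l + 1) * (m + 1 - l)) ≤ 2 * gridCurv m l := by
  have hlm : (l : ℝ) ≤ m := by exact_mod_cast hl
  have hl0 : (0 : ℝ) ≤ l := l.cast_nonneg
  have h1 : (0 : ℝ) < m + 1 - l := by linarith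
  have h2 : (0 : ℝ) < m + 2 - l := by linarith
  have e : (m + 2 : ℝ) / ((l + 1) * (m + 1 - l)) = 1 / (l + 1) + 1 / (m + 1 - l) := by
    field_simp; ring
  have k1 : 1 / ((l : ℝ) + 1) ≤ 2 * (1 / (l + 2)) := by
    rw [mul_one_div, div_le_div_iff₀ (by positivity) (by positivity)]; linarith
  have k2 : 1 / ((m : ℝ) + 1 - l) ≤ 2 * (1 / (m + 2 - l)) := by
    rw [mul_one_div, div_le_div_iff₀ h1 h2]; linarith
  rw [e]
  unfold gridCurv
  linarith

lemma abs_secondDiff_bernGrid_le_of_abs_le {m : ℕ} {a : ℕ → ℝ} {M : ℝ}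
    (h : ∀ k ≤ m + 2, |a k| ≤ M) {l : ℕ} (hl : l ≤ m) :
    |secondDiff (bernGrid (m + 2) a) l| ≤ 8 * M * gridCurv m l := by
  have hM : 0 ≤ M := (abs_nonneg _).trans (h 0 (by omega))
  have hlm : (l : ℝ) ≤ m := by exact_mod_cast hl
  have hl0 : (0 : ℝ) ≤ l := l.cast_nonneg
  have hN : (0 : ℝ) < (m + 2 : ℕ) := by positivity
  have hNe : ((m + 2 : ℕ) : ℝ) = m + 2 := by push_cast; ring
  have hy1 : (l + 1 : ℝ) / (m + 2 : ℕ) < 1 := (div_lt_one hN).2 (by rw [hNe]; linarith)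
  have hml : (0 : ℝ) < m + 1 - l := by linarith
  have ey : 1 - (l + 1 : ℝ) / (m + 2 : ℕ) = (m + 1 - l) / (m + 2 : ℕ) := by
    rw [hNe]; field_simp; ring
  have := abs_second_difference_le (hasDerivAt_bernSum (m + 1) a) (hasDerivAt_bernSum_deriv m a)
    (fun x hx => abs_mul_bernSum₂_le h hx) (y := (l + 1 : ℝ) / (m + 2 : ℕ))
    (t := 1 / (m + 2 : ℕ)) (by positivity) hy1 (by positivity)
    (by gcongr; linarith) (by rw [ey]; gcongr; linarith)
  rw [secondDiff_bernGrid_eq, add_div, sub_div _ (1 : ℝ)]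
  refine this.trans ?_
  have e : 2 * (2 * ((m : ℝ) + 2) * M) * ((1 / ((m + 2 : ℕ) : ℝ)) ^ 2 /
      ((l + 1) / (m + 2 : ℕ) * (1 - (l + 1 : ℝ) / (m + 2 : ℕ)))) =
      4 * M * ((m + 2 : ℝ) / ((l + 1) * (m + 1 - l))) := by
    rw [ey]; field_simp; ring
  rw [e]
  calc _ ≤ 4 * M * (2 * gridCurv m l) :=
        mul_le_mul_of_nonneg_left (inv_le_gridCurv hl) (by positivity)
    _ = _ := by ring

lemma abs_mul_bernSum₂_le_of_secondDiff {m : ℕ} {a : ℕ → ℝ} {S : ℝ} (hS : 0 ≤ S)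
    (h : ∀ i ≤ m, |secondDiff a i| ≤ S * gridCurv m i) {x : ℝ} (hx : x ∈ Set.Ioo (0 : ℝ) 1) :
    |x * (1 - x) * bernSum₂ m a x| ≤ S * (m + 2) := by
  have hw : ∀ k, 0 ≤ bernWeight (m + 2) k x := fun k => bernWeight_nonneg _ _ hx.1.le hx.2.le
  have hsum : ∑ i ∈ Finset.range (m + 1), bernWeight (m + 2) (i + 1) x * (S * (m + 2)) ≤
      S * (m + 2) := by
    have e := bernSum_const (m + 2) (S * (m + 2)) x
    unfold bernSum at e
    rw [Finset.sum_range_succ', Finset.sum_range_succ] at e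
    have := mul_nonneg (hw 0) (show 0 ≤ S * (m + 2) by positivity)
    have := mul_nonneg (hw (m + 1 + 1)) (show 0 ≤ S * (m + 2) by positivity)
    linarith
  rw [phi_sq_mul_bernSum₂]
  refine (Finset.abs_sum_le_sum_abs _ _).trans (le_trans (Finset.sum_le_sum fun i hi => ?_) hsum)
  have hi' : i ≤ m := by have := Finset.mem_range.1 hi; omega
  have him : (i : ℝ) ≤ m := by exact_mod_cast hi'
  have c : 0 ≤ ((i : ℝ) + 1) * (m + 1 - i) := mul_nonneg (by positivity) (by linarith)
  rw [abs_mul, abs_of_nonneg (hw _), abs_mul, abs_of_nonneg c]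
  refine mul_le_mul_of_nonneg_left ?_ (hw _)
  have e1 := mul_le_mul_of_nonneg_left (h i hi') c
  have e2 := mul_le_mul_of_nonneg_left (mul_gridCurv_le_one hi')
    (show 0 ≤ S * ((m : ℝ) + 2) by positivity)
  refine e1.trans (le_trans (le_of_eq ?_) (e2.trans_eq (mul_one _)))
  field_simp

/-- The size of the second differences of `a` on `0, …, m + 2` relative to `gridCurv`. -/
noncomputable def curvNorm (m : ℕ) (a : ℕ → ℝ) : ℝ :=
  (Finset.range (m + 1)).sup' ⟨0, by simp⟩ fun l => |secondDiff a l| / gridCurv m l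

lemma abs_secondDiff_le_curvNorm {m l : ℕ} (a : ℕ → ℝ) (hl : l ≤ m) :
    |secondDiff a l| ≤ curvNorm m a * gridCurv m l := by
  rw [← div_le_iff₀ (gridCurv_pos hl)]
  exact Finset.le_sup' (fun l => |secondDiff a l| / gridCurv m l)
    (Finset.mem_range.2 (by omega))

lemma exists_curvNorm_eq (m : ℕ) (a : ℕ → ℝ) :
    ∃ l ≤ m, curvNorm m a * gridCurv m l = |secondDiff a l| := by
  obtain ⟨l, hl, e⟩ := Finset.exists_mem_eq_sup' (s := Finset.range (m + 1)) ⟨0, by simp⟩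
    fun l => |secondDiff a l| / gridCurv m l
  have hl' : l ≤ m := by have := Finset.mem_range.1 hl; omega
  refine ⟨l, hl', ?_⟩
  rw [curvNorm, e, div_mul_cancel₀ _ (gridCurv_pos hl').ne']

lemma curvNorm_nonneg (m : ℕ) (a : ℕ → ℝ) : 0 ≤ curvNorm m a := by
  obtain ⟨l, hl, e⟩ := exists_curvNorm_eq m a
  exact nonneg_of_mul_nonneg_left (e ▸ abs_nonneg _) (gridCurv_pos hl)

lemma curvNorm_le_add {m : ℕ} {a b : ℕ → ℝ} {c : ℝ}
    (h : ∀ l ≤ m, |secondDiff (fun k => a k - b k) l| ≤ c * gridCurv m l) :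
    curvNorm m a ≤ curvNorm m b + c := by
  obtain ⟨l, hl, e⟩ := exists_curvNorm_eq m a
  refine le_of_mul_le_mul_right ?_ (gridCurv_pos hl)
  have h1 := h l hl
  have h2 := abs_secondDiff_le_curvNorm b hl
  rw [secondDiff_sub] at h1
  have h3 := abs_sub_abs_le_abs_sub (secondDiff a l) (secondDiff b l)
  rw [e, add_mul]
  linarith

lemma curvNorm_le_of_curvNorm_bernGrid_ge {m : ℕ} {a : ℕ → ℝ} {δ : ℝ}
    (h : ∀ k ≤ m + 2, |bernGrid (m + 2) a k - a k| ≤ δ)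
    (hS : 19 / 20 * curvNorm m a ≤ curvNorm m (bernGrid (m + 2) a)) :
    7 / 120 * curvNorm m a ≤ δ := by
  obtain ⟨l, hl, e⟩ := exists_curvNorm_eq m (bernGrid (m + 2) a)
  refine le_of_abs_secondDiff_ge (fun i hi => abs_secondDiff_le_curvNorm a hi)
    (curvNorm_nonneg m a) hl ?_ (h (l + 1) (by omega))
  rw [← e, ← mul_assoc]
  exact mul_le_mul_of_nonneg_right hS (gridCurv_pos hl).le

lemma abs_bernGrid_sub_le {n : ℕ} (hn : 0 < n) {a b : ℕ → ℝ} {c : ℝ}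
    (h : ∀ k ≤ n, |a k - b k| ≤ c) {k : ℕ} (hk : k ≤ n) :
    |bernGrid n a k - bernGrid n b k| ≤ c := by
  unfold bernGrid
  rw [← bernSum_sub]
  have hn' : (0 : ℝ) < n := by exact_mod_cast hn
  exact abs_bernSum_le n h (by positivity) ((div_le_one hn').2 (by exact_mod_cast hk))

lemma curvNorm_bernGrid_le {m : ℕ} {a : ℕ → ℝ} {δ : ℝ}
    (h : ∀ k ≤ m + 2, |bernGrid (m + 2) a k - a k| ≤ δ) :
    curvNorm m (bernGrid (m + 2) a) ≤ 224 * δ := by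
  set T := bernGrid (m + 2) with hT
  have hδ : 0 ≤ δ := (abs_nonneg _).trans (h 0 (by omega))
  have step : ∀ i, ∀ k ≤ m + 2, |T^[i + 1] a k - T^[i] a k| ≤ δ := by
    intro i
    induction i with
    | zero => exact h
    | succ i ih =>
      intro k hk
      rw [Function.iterate_succ_apply' T (i + 1), Function.iterate_succ_apply' T i]
      exact abs_bernGrid_sub_le (by omega) (by simpa only [Function.iterate_succ_apply'] using ih) hk
  have far : ∀ i : ℕ, ∀ k ≤ m + 2, |a k - T^[i] a k| ≤ i * δ := by
    intro i
    induction i with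
    | zero => intro k _; simp
    | succ i ih =>
      intro k hk
      have h1 := ih k hk
      have h2 := step i k hk
      rw [abs_sub_comm] at h2
      have h3 := abs_sub_le (a k) (T^[i] a k) (T^[i + 1] a k)
      push_cast
      linarith
  have cmp : ∀ i : ℕ, curvNorm m (T a) ≤ curvNorm m (T^[i + 1] a) + 8 * (i * δ) := by
    intro i
    refine curvNorm_le_add fun l hl => ?_
    have e : (fun k => T a k - T^[i + 1] a k) = T (fun k => a k - T^[i] a k) := by
      funext k
      rw [Function.iterate_succ_apply']
      exact (bernSum_sub _ _ _ _).symm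
    rw [e]
    exact abs_secondDiff_bernGrid_le_of_abs_le (far i) hl
  by_cases hc : ∃ i < 14, 19 / 20 * curvNorm m (T^[i + 1] a) ≤ curvNorm m (T^[i + 2] a)
  · obtain ⟨i, hi, hle⟩ := hc
    have h1 : 7 / 120 * curvNorm m (T^[i + 1] a) ≤ δ := by
      refine curvNorm_le_of_curvNorm_bernGrid_ge (fun k hk => ?_) ?_
      · have := step (i + 1) k hk
        rwa [Function.iterate_succ_apply' T (i + 1)] at this
      · rwa [Function.iterate_succ_apply' T (i + 1)] at hle
    have h2 := cmp i
    have h3 : (i : ℝ) * δ ≤ 14 * δ :=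
      mul_le_mul_of_nonneg_right (by exact_mod_cast hi.le) hδ
    linarith
  · push Not at hc
    have dec : ∀ i ≤ 14, curvNorm m (T^[i + 1] a) ≤ (19 / 20) ^ i * curvNorm m (T a) := by
      intro i
      induction i with
      | zero => intro _; simp
      | succ i ih =>
        intro hi
        have h1 := hc i (by omega)
        have h2 := ih (by omega)
        rw [pow_succ]
        linarith
    have h1 := dec 14 le_rfl
    have h2 := cmp 14
    have h3 := curvNorm_nonneg m (T a)
    norm_num at h1 h2
    linarith

lemma abs_ditzSymmDiff_two_le_of_near {f g : ℝ → ℝ} {ε c t : ℝ}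
    (hfg : ∀ x ∈ Set.Icc (0 : ℝ) 1, |f x - g x| ≤ ε) (hc : 0 ≤ c) (ht : 0 ≤ t) {x : ℝ}
    (hx : x ∈ Set.Icc (0 : ℝ) 1)
    (hg : 0 < x → x < 1 → t ≤ x → t ≤ 1 - x → |g (x + t) - 2 * g x + g (x - t)| ≤ c) :
    |ditzSymmDiff 2 t f x| ≤ 4 * ε + c := by
  have hε : 0 ≤ ε := (abs_nonneg _).trans (hfg x hx)
  rw [ditzSymmDiff_two]
  split_ifs with hh
  · obtain ⟨⟨h1, -⟩, -, h2⟩ := hh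
    rcases ht.eq_or_lt with rfl | ht0
    · rw [add_zero, sub_zero]
      have : f x - 2 * f x + f x = 0 := by ring
      rw [this, abs_zero]
      positivity
    have k := hg (by linarith) (by linarith) (by linarith) (by linarith)
    have a1 := hfg (x + t) ⟨by linarith [hx.1], h2⟩
    have a2 := hfg (x - t) ⟨h1, by linarith [hx.2]⟩
    have a3 := hfg x hx
    rw [abs_le] at *
    constructor <;> linarith
  · rw [abs_zero]
    positivity

lemma mul_sq_le_one {n : ℕ} (hn : 1 ≤ n) {h : ℝ} (h0 : 0 < h) (h1 : h ≤ 1 / Real.sqrt n) :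
    n * h ^ 2 ≤ 1 := by
  have hn' : (0 : ℝ) < n := by exact_mod_cast hn
  have : h ^ 2 ≤ (1 / Real.sqrt n) ^ 2 := by gcongr
  rw [div_pow, Real.sq_sqrt hn'.le, one_pow, le_div_iff₀ hn'] at this
  linarith

lemma abs_ditzSymmDiff_two_le_error {f : ℝ → ℝ} {n : ℕ} (hn : 1 ≤ n) {δ : ℝ}
    (hδ : ∀ p ∈ Set.Icc (0 : ℝ) 1, |bernstein' n f p - f p| ≤ δ) {h x : ℝ} (h0 : 0 < h)
    (h1 : h ≤ 1 / Real.sqrt n) (hx : x ∈ Set.Icc (0 : ℝ) 1) :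
    |ditzSymmDiff 2 (h * Real.sqrt (x * (1 - x))) f x| ≤ 456 * δ := by
  have hδ0 : 0 ≤ δ := (abs_nonneg _).trans (hδ x hx)
  set a : ℕ → ℝ := fun k => f ((k : ℝ) / n) with ha
  have hδ' : ∀ p ∈ Set.Icc (0 : ℝ) 1, |bernSum n a p - f p| ≤ δ := hδ
  have ht : 0 ≤ h * Real.sqrt (x * (1 - x)) := by positivity
  obtain rfl | ⟨m, rfl⟩ : n = 1 ∨ ∃ m, n = m + 2 := by
    rcases hn.eq_or_lt with e | e
    · exact Or.inl e.symm
    · exact Or.inr ⟨n - 2, by omega⟩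
  · have := abs_ditzSymmDiff_two_le_of_near (f := f) (g := bernSum 1 a) (ε := δ) (c := 0)
      (fun y hy => by rw [abs_sub_comm]; exact hδ' y hy) le_rfl ht hx (fun _ _ _ _ => by
        have e : ∀ y, bernSum 1 a y = (1 - y) * a 0 + y * a 1 := fun y => by
          rw [bernSum_succ, bernSum_zero, bernSum_zero]
        simp only [e]
        refine (congrArg abs ?_).trans_le abs_zero.le
        ring)
    linarith
  · have hgrid : ∀ k ≤ m + 2, |bernGrid (m + 2) a k - a k| ≤ δ := fun k hk =>
      hδ' _ (grid_mem_Icc hk)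
    set b := bernGrid (m + 2) a with hb
    have hS : curvNorm m b ≤ 224 * δ := curvNorm_bernGrid_le hgrid
    have hS0 := curvNorm_nonneg m b
    have hfg : ∀ y ∈ Set.Icc (0 : ℝ) 1, |f y - bernSum (m + 2) b y| ≤ 2 * δ := by
      intro y hy
      have e1 := hδ' y hy
      have e2 : |bernSum (m + 2) b y - bernSum (m + 2) a y| ≤ δ := by
        rw [← bernSum_sub]
        exact abs_bernSum_le _ hgrid hy.1 hy.2
      rw [abs_le] at *
      constructor <;> linarith
    have := abs_ditzSymmDiff_two_le_of_near hfg (c := 2 * curvNorm m b) (by positivity) ht hx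
      (fun hx0 hx1 ht0 ht1 => by
        refine (abs_second_difference_le (hasDerivAt_bernSum (m + 1) b)
          (hasDerivAt_bernSum_deriv m b) (fun y hy => abs_mul_bernSum₂_le_of_secondDiff hS0
          (fun i hi => abs_secondDiff_le_curvNorm b hi) hy) hx0 hx1 ht ht0 ht1).trans ?_
        have hv : 0 < x * (1 - x) := mul_pos hx0 (by linarith)
        rw [mul_pow, Real.sq_sqrt hv.le, mul_div_cancel_right₀ _ hv.ne']
        have k := mul_le_mul_of_nonneg_left (mul_sq_le_one hn h0 h1)
          (show 0 ≤ 2 * curvNorm m b by positivity)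
        push_cast at k
        linarith)
    linarith

lemma continuous_bernSum (n : ℕ) (a : ℕ → ℝ) : Continuous (bernSum n a) := by
  unfold bernSum bernWeight
  fun_prop

lemma bddAbove_bernstein'_error {f : ℝ → ℝ} (hf : ContinuousOn f (Set.Icc 0 1)) (n : ℕ) :
    BddAbove ((fun p => |bernstein' n f p - f p|) '' Set.Icc (0 : ℝ) 1) :=
  isCompact_Icc.bddAbove_image
    (((continuous_bernSum n fun k => f ((k : ℝ) / n)).continuousOn.sub hf).abs)

/-- universal two-sided bound for the Bernstein approximation error:
`c₁ ω_φ²(f,1/√n) ≤ ‖B_n[f] − f‖ ≤ c₂ ω_φ²(f,1/√n)` for all `f ∈ C[0,1]`, `n ≥ 1`. -/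
theorem bernstein_error_equiv_dtMod :
    ∃ c₁ > 0, ∃ c₂ > 0, ∀ f : ℝ → ℝ, ContinuousOn f (Set.Icc 0 1) → ∀ n : ℕ, 1 ≤ n →
      c₁ * dtMod 2 f (1 / Real.sqrt n) ≤
        sSup ((fun p => |bernstein' n f p - f p|) '' Set.Icc (0:ℝ) 1) ∧
      sSup ((fun p => |bernstein' n f p - f p|) '' Set.Icc (0:ℝ) 1) ≤
        c₂ * dtMod 2 f (1 / Real.sqrt n) := by
  refine ⟨1 / 456, by norm_num, 3, by norm_num, fun f hf n hn => ⟨?_, ?_⟩⟩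
  · have hδ : ∀ p ∈ Set.Icc (0 : ℝ) 1, |bernstein' n f p - f p| ≤
        sSup ((fun p => |bernstein' n f p - f p|) '' Set.Icc (0:ℝ) 1) := fun p hp =>
      le_csSup (bddAbove_bernstein'_error hf n) ⟨p, hp, rfl⟩
    have key : dtMod 2 f (1 / Real.sqrt n) ≤
        456 * sSup ((fun p => |bernstein' n f p - f p|) '' Set.Icc (0:ℝ) 1) := by
      refine Real.sSup_le ?_ (mul_nonneg (by norm_num) ((abs_nonneg _).trans (hδ 0 (by simp))))
      rintro _ ⟨h, x, h0, h1, hx, rfl⟩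
      exact abs_ditzSymmDiff_two_le_error hn hδ h0 h1 hx
    linarith
  · refine csSup_le ((Set.nonempty_Icc.2 zero_le_one).image _) ?_
    rintro _ ⟨p, hp, rfl⟩
    exact abs_bernstein'_sub_le hf hn hp
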